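/- arXiv:2412.03559 — 4 statements merged into one kernel-verified Lean document; each statement's English description precedes it below -/
import Mathlib

section
/- Let 0<q<1 be real, let g be a nonzero purely imaginary complex number, let b be a nonzero complex number and c = conj(b), and assume the parameters are such that no factor appearing in a denominator of F_{n,k}(g,b,c|q) or of h_n(g,b,c|q) vanishes. Then the functions F_n(z) = F_n(z;g,b,c|q), n ∈ ℤ, form a family of orthogonal functions on the unit circle with weight function w(z)=1: for all n,m ∈ ℤ, (1/2π)∫_0^{2π} F_n(e^{iθ}) · conj(F_m(e^{iθ})) dθ = h_n(g,b,c|q) δ_{n,m}. -/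
open Complex

/-- The infinite `q`-shifted factorial `(a;q)_∞`. -/
noncomputable def qPochInf (a q : ℂ) : ℂ := ∏' j : ℕ, (1 - a * q ^ j)

/-- The `q`-shifted factorial `(a;q)_k` for integer `k`, given by the
(generically equal) product formulas. -/
noncomputable def qPoch (a q : ℂ) (k : ℤ) : ℂ :=
  if 0 ≤ k then ∏ j ∈ Finset.range k.toNat, (1 - a * q ^ j)
  else (∏ j ∈ Finset.range (-k).toNat, (1 - a * q ^ (-(j : ℤ) - 1)))⁻¹

/-- The coefficients `F_{n,k}(g,b,c|q)`. -/
noncomputable def Fnk (q : ℝ) (g b c : ℂ) (n k : ℤ) : ℂ :=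
  (1 - g * (q : ℂ) ^ k) / (1 - g) *
    (qPoch b (q : ℂ) (n + k) * qPoch (g ^ 2 / c) (q : ℂ) (k - n) /
      (qPoch (c * (q : ℂ)) (q : ℂ) (n + k) * qPoch (g ^ 2 * (q : ℂ) / b) (q : ℂ) (k - n))) *
    ((Real.sqrt q : ℂ)) ^ k

/-- The function `F_n(z; g,b,c|q) = Σ_{k∈ℤ} F_{n,k}(g,b,c|q) z^k`. -/
noncomputable def Fq (q : ℝ) (g b c : ℂ) (n : ℤ) (z : ℂ) : ℂ :=
  ∑' k : ℤ, Fnk q g b c n k * z ^ k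

/-- The squared norms `h_n(g,b,c|q)`. -/
noncomputable def hnorm (q : ℝ) (g b c : ℂ) (n : ℤ) : ℂ :=
  qPochInf (q : ℂ) (q : ℂ) * qPochInf (q : ℂ) (q : ℂ) * qPochInf (g ^ 2 * (q : ℂ)) (q : ℂ) *
      qPochInf ((q : ℂ) / g ^ 2) (q : ℂ) * qPochInf (g ^ 2 * (q : ℂ) / (b * c)) (q : ℂ) *
      qPochInf (b * c * (q : ℂ) / g ^ 2) (q : ℂ) * qPochInf (c * (q : ℂ) / b) (q : ℂ) *
      qPochInf (b * (q : ℂ) / c) (q : ℂ) /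
    (qPochInf (g ^ 2 * (q : ℂ) / b) (q : ℂ) * qPochInf (b * (q : ℂ) / g ^ 2) (q : ℂ) *
      qPochInf (g ^ 2 * (q : ℂ) / c) (q : ℂ) * qPochInf (c * (q : ℂ) / g ^ 2) (q : ℂ) *
      qPochInf (b * (q : ℂ)) (q : ℂ) * qPochInf ((q : ℂ) / b) (q : ℂ) *
      qPochInf (c * (q : ℂ)) (q : ℂ) * qPochInf ((q : ℂ) / c) (q : ℂ)) *
  ((1 - b * c / g ^ 2) / (1 - b * c * (q : ℂ) ^ (2 * n) / g ^ 2)) * (q : ℂ) ^ n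

/-!
Put `a = g ^ 2`. By conjugate symmetry of the coefficients, Parseval's identity turns the integral
into `∑ k, F_{n,k}(g,b,c) F_{m,k}(-g,c,b)`. Up to a constant its `k`-th term is
`q ^ (-k) (1 - a q ^ (2 k)) R (X_k)`, where `X_k = a q ^ k + q ^ (-k)` and, for `m < n`, `R` is the
rational function `∏ (X - B_j) / ∏ (X - C_j)` over `m < j < n` and `m ≤ j ≤ n` respectively, with
`B_j = b q ^ j + a / (b q ^ j)` and `C_j = c q ^ j + a / (c q ^ j)`; for `m = n` it is
`1 / ((X - B_n) (X - C_n))`.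

The weights `q ^ (-k) (1 - a q ^ (2 k))` are, up to a constant, the limits for `N → ∞` of
`∏ (X_k - C_j) / ∏ (X_k - X_i)` over `|j| ≤ N` and `|i| ≤ N`, `i ≠ k`. For finite `N` the sum is
therefore one of Lagrange interpolation at the nodes `X_i`. When `m < n` it is the top coefficient
of the interpolation polynomial of a polynomial of lower degree, hence zero; when `m = n` it is the
partial fraction expansion of `∏ (x - C_j) / ∏ (x - X_i)`, with `C_n` left out, at `x = B_n`, which
is a product of `q`-factors and converges to a quotient of theta functions. Dominated convergence
justifies the limit.
-/

open Filter Topology Finset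

theorem summable_int_of_tendsto_ratio {𝕜 : Type*} [NormedField 𝕜] [CompleteSpace 𝕜] {f : ℤ → 𝕜}
    {r s : 𝕜} (hf : ∀ᶠ k in cofinite, f k ≠ 0) (hr : ‖r‖ < 1) (hs : 1 < ‖s‖)
    (htop : Tendsto (fun k => f (k + 1) / f k) atTop (𝓝 r))
    (hbot : Tendsto (fun k => f (k + 1) / f k) atBot (𝓝 s)) : Summable f := by
  rw [Int.cofinite_eq, eventually_sup] at hf
  have hneg : Tendsto (fun n : ℕ => -((n : ℤ) + 1)) atTop atBot :=
    tendsto_neg_atTop_atBot.comp (tendsto_atTop_add_const_right _ _ tendsto_natCast_atTop_atTop)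
  refine .of_nat_of_neg_add_one
    (summable_of_ratio_test_tendsto_lt_one hr (tendsto_natCast_atTop_atTop.eventually hf.2) ?_)
    (summable_of_ratio_test_tendsto_lt_one (inv_lt_one_of_one_lt₀ hs)
      (hneg.eventually hf.1) ?_)
  · simpa [Function.comp_def] using (htop.comp tendsto_natCast_atTop_atTop).norm
  · have hinv := (hbot.comp (hneg.comp (tendsto_add_atTop_nat 1))).norm.inv₀ (by positivity)
    refine hinv.congr fun n => ?_
    have hn : -(((n + 1 : ℕ) : ℤ) + 1) + 1 = -((n : ℤ) + 1) := by push_cast; ring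
    simp only [Function.comp_apply, norm_div, inv_div, hn]

section Zpow

variable {q : ℂ} (hq : ‖q‖ < 1)

include hq

theorem tendsto_zpow_atTop_nhds_zero : Tendsto (fun k : ℤ => q ^ k) atTop (𝓝 0) := by
  rw [← Nat.map_cast_int_atTop, tendsto_map'_iff]
  simpa [Function.comp_def] using tendsto_pow_atTop_nhds_zero_of_norm_lt_one hq

theorem tendsto_one_sub_div_one_sub_atTop (x y : ℂ) :
    Tendsto (fun k : ℤ => (1 - x * q ^ k) / (1 - y * q ^ k)) atTop (𝓝 1) := by
  have hlim := tendsto_zpow_atTop_nhds_zero hq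
  simpa [Pi.div_def] using
    ((hlim.const_mul x).const_sub 1).div ((hlim.const_mul y).const_sub 1) (by simp)

theorem tendsto_one_sub_div_one_sub_atBot (hq0 : q ≠ 0) (x : ℂ) {y : ℂ} (hy : y ≠ 0) :
    Tendsto (fun k : ℤ => (1 - x * q ^ k) / (1 - y * q ^ k)) atBot (𝓝 (x / y)) := by
  have hlim := (tendsto_zpow_atTop_nhds_zero hq).comp tendsto_neg_atBot_atTop
  have key := (hlim.sub_const x).div (hlim.sub_const y) (by simpa using hy)
  rw [zero_sub, zero_sub, neg_div_neg_eq] at key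
  refine key.congr fun k => ?_
  have hk : q ^ k ≠ 0 := zpow_ne_zero k hq0
  simp only [Pi.div_apply, Function.comp_apply, zpow_neg]
  rw [← mul_div_mul_right _ _ hk, sub_mul, sub_mul, inv_mul_cancel₀ hk]

end Zpow

theorem norm_prod_le_exp_tsum {ι 𝕜 : Type*} [NormedField 𝕜] {f : ι → 𝕜}
    (hf : Summable fun i => ‖f i - 1‖) (s : Finset ι) :
    ‖∏ i ∈ s, f i‖ ≤ Real.exp (∑' i, ‖f i - 1‖) := by
  rw [norm_prod]
  calc ∏ i ∈ s, ‖f i‖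
      ≤ ∏ i ∈ s, (1 + ‖f i - 1‖) :=
        prod_le_prod (fun _ _ => norm_nonneg _) fun i _ => by
          simpa using norm_add_le (1 : 𝕜) (f i - 1)
    _ ≤ Real.exp (∑ i ∈ s, ‖f i - 1‖) :=
        Real.prod_one_add_le_exp_sum s fun _ => norm_nonneg _
    _ ≤ Real.exp (∑' i, ‖f i - 1‖) :=
        Real.exp_le_exp.2 (hf.sum_le_tsum s fun _ _ => norm_nonneg _)

theorem tendsto_Icc_sub_add_atTop (n : ℤ) :
    Tendsto (fun N : ℕ => Icc (n - N) (n + N)) atTop atTop := by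
  refine tendsto_atTop.2 fun s => ?_
  obtain ⟨M, hM⟩ := ((tendsto_Icc_neg (R := ℤ)).eventually_ge_atTop s).exists
  filter_upwards [eventually_ge_atTop (n.natAbs + M)] with N hN
  exact hM.trans (Icc_subset_Icc (by lia) (by lia))

theorem tendsto_sum_prod_Icc_mul {𝕜 : Type*} [NormedField 𝕜] [CompleteSpace 𝕜] {f t : ℤ → 𝕜}
    {P : 𝕜} (hf : Summable fun l => ‖f l - 1‖) (hP : HasProd f P) (ht : Summable fun k => ‖t k‖) :
    Tendsto (fun N : ℕ => ∑ k ∈ Icc (-N : ℤ) N, (∏ l ∈ Icc (k - N) (k + N), f l) * t k) atTop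
      (𝓝 (P * ∑' k, t k)) := by
  let G (N : ℕ) (k : ℤ) : 𝕜 := (∏ l ∈ Icc (k - N) (k + N), f l) * t k
  let F (N : ℕ) : ℤ → 𝕜 := (Icc (-N : ℤ) N : Set ℤ).indicator (G N)
  have hlim (k : ℤ) : Tendsto (F · k) atTop (𝓝 (P * t k)) := by
    refine ((hP.comp (tendsto_Icc_sub_add_atTop k)).mul_const (t k)).congr' ?_
    filter_upwards [(tendsto_Icc_neg (R := ℤ)).eventually_ge_atTop {k}] with N hN
    exact (Set.indicator_of_mem (mem_coe.2 (singleton_subset_iff.1 hN)) (G N)).symm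
  have hbound (N : ℕ) (k : ℤ) : ‖F N k‖ ≤ Real.exp (∑' l, ‖f l - 1‖) * ‖t k‖ := by
    refine (norm_indicator_le_norm_self (G N) k).trans ?_
    rw [norm_mul]
    gcongr
    exact norm_prod_le_exp_tsum hf _
  have key :=
    tendsto_tsum_of_dominated_convergence (f := F) (ht.mul_left _) hlim (.of_forall hbound)
  rw [tsum_mul_left] at key
  exact key.congr fun N => (sum_eq_tsum_indicator (G N) _).symm

/-- `z` is not an integral power of `q`: the genericity condition under which no factor
`1 - z q ^ j` of a (two-sided) `q`-product vanishes. -/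
def NotQPower (q z : ℂ) : Prop := ∀ j : ℤ, z * q ^ j ≠ 1

/-- The theta function `(z;q)_∞ (q/z;q)_∞` without its factor `1 - z`. -/
noncomputable def reducedTheta (q z : ℂ) : ℂ := qPochInf (z * q) q * qPochInf (q / z) q

/-- The `l`-th factor of the two-sided product for a quotient of theta functions with zeros at `x`,
`y` and poles at `z`, `w`. The factor at `l = 0` is left out, so that `z = 1` is allowed. -/
noncomputable def thetaFactor (q x y z w : ℂ) (l : ℤ) : ℂ :=
  if l = 0 then 1 else (1 - x * q ^ l) * (1 - y * q ^ l) / ((1 - z * q ^ l) * (1 - w * q ^ l))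

/-- The product of the factors `1 - z q ^ l` over the nonzero `l ∈ S`. -/
noncomputable def puncturedQProd (q : ℂ) (S : Finset ℤ) (z : ℂ) : ℂ :=
  ∏ l ∈ S.erase 0, (1 - z * q ^ l)

section NotQPower

variable {q z : ℂ}

theorem NotQPower.one_sub_mul_zpow_ne_zero (hz : NotQPower q z) (j : ℤ) : 1 - z * q ^ j ≠ 0 :=
  sub_ne_zero.2 (hz j).symm

theorem NotQPower.one_sub_ne_zero (hz : NotQPower q z) : 1 - z ≠ 0 := by
  simpa using hz.one_sub_mul_zpow_ne_zero 0

theorem NotQPower.mul_zpow (hq0 : q ≠ 0) (hz : NotQPower q z) (n : ℤ) :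
    NotQPower q (z * q ^ n) := fun j => by
  rw [mul_assoc, ← zpow_add₀ hq0]
  exact hz _

theorem NotQPower.mul_self (hq0 : q ≠ 0) (hz : NotQPower q z) : NotQPower q (z * q) := by
  simpa using hz.mul_zpow hq0 1

theorem NotQPower.inv (hz : NotQPower q z) : NotQPower q z⁻¹ := fun j h => by
  refine hz (-j) ?_
  rw [zpow_neg, ← inv_inv z, ← mul_inv, h, inv_one]

theorem zpow_ne_one_of_norm_lt_one (hq : ‖q‖ < 1) {l : ℤ} (hl : l ≠ 0) :
    q ^ l ≠ 1 := fun h => by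
  have hnorm := congrArg norm h
  rw [norm_zpow, norm_one] at hnorm
  exact hl ((zpow_eq_one_iff_right₀ (norm_nonneg q) hq.ne).1 hnorm)

end NotQPower

section ReducedTheta

variable {q x y z w : ℂ}

theorem hasProd_qPochInf (hq : ‖q‖ < 1) (z : ℂ) :
    HasProd (fun j : ℕ => 1 - z * q ^ j) (qPochInf z q) := by
  have hsum : Summable fun j : ℕ => ‖-(z * q ^ j)‖ := by
    simpa using (summable_geometric_of_lt_one (norm_nonneg q) hq).mul_left ‖z‖
  simpa [qPochInf, sub_eq_add_neg] using (multipliable_one_add_of_summable hsum).hasProd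

theorem qPochInf_ne_zero (hq : ‖q‖ < 1) (hz : ∀ j : ℕ, z * q ^ j ≠ 1) : qPochInf z q ≠ 0 := by
  have hsum : Summable fun j : ℕ => ‖-(z * q ^ j)‖ := by
    simpa using (summable_geometric_of_lt_one (norm_nonneg q) hq).mul_left ‖z‖
  have hne (j : ℕ) : 1 + -(z * q ^ j) ≠ 0 := by
    rw [← sub_eq_add_neg, sub_ne_zero]
    exact (hz j).symm
  simpa [qPochInf, sub_eq_add_neg] using tprod_one_add_ne_zero_of_summable hne hsum

theorem qPochInf_mul_self_ne_zero (hq : ‖q‖ < 1) (hz : ∀ l : ℤ, l ≠ 0 → z * q ^ l ≠ 1) :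
    qPochInf (z * q) q ≠ 0 := by
  refine qPochInf_ne_zero hq fun j => ?_
  rw [mul_assoc, ← pow_succ']
  exact_mod_cast hz (j + 1) (by lia)

theorem qPochInf_self_div_ne_zero (hq : ‖q‖ < 1) (hz0 : z ≠ 0)
    (hz : ∀ l : ℤ, l ≠ 0 → z * q ^ l ≠ 1) : qPochInf (q / z) q ≠ 0 := by
  refine qPochInf_ne_zero hq fun j h => hz (-(j + 1 : ℕ)) (by lia) ?_
  rw [zpow_neg, zpow_natCast, pow_succ', ← div_eq_mul_inv, div_eq_one_iff_eq]
  · rwa [div_mul_eq_mul_div, div_eq_one_iff_eq hz0, eq_comm] at h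
  · rintro h0
    simp [div_mul_eq_mul_div, h0] at h

theorem reducedTheta_ne_zero (hq : ‖q‖ < 1) (hz0 : z ≠ 0)
    (hz : ∀ l : ℤ, l ≠ 0 → z * q ^ l ≠ 1) : reducedTheta q z ≠ 0 :=
  mul_ne_zero (qPochInf_mul_self_ne_zero hq hz) (qPochInf_self_div_ne_zero hq hz0 hz)

theorem thetaFactor_neg (hq0 : q ≠ 0) (hx : x ≠ 0) (hy : y ≠ 0) (hz : z ≠ 0) (hw : w ≠ 0)
    (h : x * y = z * w) (l : ℤ) :
    thetaFactor q x y z w (-l) = thetaFactor q x⁻¹ y⁻¹ z⁻¹ w⁻¹ l := by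
  have flip {u : ℂ} (hu : u ≠ 0) : 1 - u * q ^ (-l) = -u * q ^ (-l) * (1 - u⁻¹ * q ^ l) := by
    have := zpow_ne_zero l hq0
    rw [zpow_neg]
    field_simp
    ring
  have hpow := zpow_ne_zero (-l) hq0
  have hzw : -z * q ^ (-l) * (-w * q ^ (-l)) ≠ 0 :=
    mul_ne_zero (mul_ne_zero (neg_ne_zero.2 hz) hpow) (mul_ne_zero (neg_ne_zero.2 hw) hpow)
  simp only [thetaFactor, neg_eq_zero]
  refine if_congr Iff.rfl rfl ?_
  have hcoef : -x * q ^ (-l) * (-y * q ^ (-l)) = -z * q ^ (-l) * (-w * q ^ (-l)) := by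
    linear_combination (q ^ (-l)) ^ 2 * h
  rw [flip hx, flip hy, flip hz, flip hw, mul_mul_mul_comm, mul_mul_mul_comm (-z * _), hcoef,
    mul_div_mul_left _ _ hzw]

theorem hasProd_thetaFactor_natCast_add_one (hq : ‖q‖ < 1) (x y : ℂ)
    (hz : qPochInf (z * q) q ≠ 0) (hw : qPochInf (w * q) q ≠ 0) :
    HasProd (fun n : ℕ => thetaFactor q x y z w (n + 1))
      (qPochInf (x * q) q * qPochInf (y * q) q / (qPochInf (z * q) q * qPochInf (w * q) q)) := by
  have key := ((hasProd_qPochInf hq (x * q)).mul (hasProd_qPochInf hq (y * q))).div₀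
    ((hasProd_qPochInf hq (z * q)).mul (hasProd_qPochInf hq (w * q))) (mul_ne_zero hz hw)
  refine key.congr_fun fun n => ?_
  have hn : (n : ℤ) + 1 ≠ 0 := by lia
  have hpow (u : ℂ) : u * q ^ ((n : ℤ) + 1) = u * q * q ^ n := by
    rw [mul_assoc, ← pow_succ']
    norm_cast
  simp only [thetaFactor, if_neg hn, hpow]

theorem hasProd_thetaFactor (hq0 : q ≠ 0) (hq : ‖q‖ < 1) (hx0 : x ≠ 0) (hy0 : y ≠ 0) (hz0 : z ≠ 0)
    (hw0 : w ≠ 0) (h : x * y = z * w) (hz : ∀ l : ℤ, l ≠ 0 → z * q ^ l ≠ 1)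
    (hw : ∀ l : ℤ, l ≠ 0 → w * q ^ l ≠ 1) :
    HasProd (thetaFactor q x y z w)
      (reducedTheta q x * reducedTheta q y / (reducedTheta q z * reducedTheta q w)) := by
  have hpos := hasProd_thetaFactor_natCast_add_one hq x y
    (qPochInf_mul_self_ne_zero hq hz) (qPochInf_mul_self_ne_zero hq hw)
  have hneg := hasProd_thetaFactor_natCast_add_one hq x⁻¹ y⁻¹ (z := z⁻¹) (w := w⁻¹)
    (by simpa [inv_mul_eq_div] using qPochInf_self_div_ne_zero hq hz0 hz)
    (by simpa [inv_mul_eq_div] using qPochInf_self_div_ne_zero hq hw0 hw)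
  simp only [← thetaFactor_neg hq0 hx0 hy0 hz0 hw0 h, inv_mul_eq_div] at hneg
  have hnonneg := HasProd.zero_mul (f := fun n : ℕ => thetaFactor q x y z w n)
    (by exact_mod_cast hpos)
  convert hnonneg.of_nat_of_neg_add_one hneg using 1
  simp only [reducedTheta, thetaFactor, Nat.cast_zero, if_true]
  ring

theorem summable_zpow_div_one_sub_mul_one_sub (hq0 : q ≠ 0) (hq : ‖q‖ < 1) (hz0 : z ≠ 0)
    (hw0 : w ≠ 0) (hz : ∀ l : ℤ, l ≠ 0 → z * q ^ l ≠ 1) (hw : ∀ l : ℤ, l ≠ 0 → w * q ^ l ≠ 1) :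
    Summable fun l : ℤ => q ^ l / ((1 - z * q ^ l) * (1 - w * q ^ l)) := by
  have hratio (l : ℤ) : q * ((1 - z * q ^ l) / (1 - z * q * q ^ l)) *
      ((1 - w * q ^ l) / (1 - w * q * q ^ l)) =
      q ^ (l + 1) / ((1 - z * q ^ (l + 1)) * (1 - w * q ^ (l + 1))) /
        (q ^ l / ((1 - z * q ^ l) * (1 - w * q ^ l))) := by
    rw [div_div_div_comm, zpow_add_one₀ hq0, mul_div_cancel_left₀ _ (zpow_ne_zero l hq0),
      mul_assoc z, mul_assoc w, mul_comm q (q ^ l), mul_assoc q, ← mul_div_mul_comm,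
      div_div_eq_mul_div, ← mul_div_assoc]
  refine summable_int_of_tendsto_ratio (r := q) (s := q⁻¹) ?_ hq ?_ ?_ ?_
  · filter_upwards [eventually_cofinite_ne (0 : ℤ)] with l hl
    exact div_ne_zero (zpow_ne_zero l hq0)
      (mul_ne_zero (sub_ne_zero.2 (hz l hl).symm) (sub_ne_zero.2 (hw l hl).symm))
  · rw [norm_inv]
    exact (one_lt_inv₀ (norm_pos_iff.2 hq0)).2 hq
  · simpa [hratio] using ((tendsto_one_sub_div_one_sub_atTop hq z (z * q)).const_mul q).mul
      (tendsto_one_sub_div_one_sub_atTop hq w (w * q))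
  · have key := ((tendsto_one_sub_div_one_sub_atBot hq hq0 z (mul_ne_zero hz0 hq0)).const_mul q).mul
      (tendsto_one_sub_div_one_sub_atBot hq hq0 w (mul_ne_zero hw0 hq0))
    simp only [hratio] at key
    convert key using 2
    field_simp

theorem summable_norm_thetaFactor_sub_one (hq0 : q ≠ 0) (hq : ‖q‖ < 1) (hz0 : z ≠ 0) (hw0 : w ≠ 0)
    (h : x * y = z * w) (hz : ∀ l : ℤ, l ≠ 0 → z * q ^ l ≠ 1)
    (hw : ∀ l : ℤ, l ≠ 0 → w * q ^ l ≠ 1) :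
    Summable fun l => ‖thetaFactor q x y z w l - 1‖ := by
  refine ((summable_zpow_div_one_sub_mul_one_sub hq0 hq hz0 hw0 hz hw).mul_left
    (z + w - x - y)).norm.of_norm_bounded_eventually ?_
  filter_upwards [eventually_cofinite_ne (0 : ℤ)] with l hl
  have hzl : 1 - z * q ^ l ≠ 0 := sub_ne_zero.2 (hz l hl).symm
  have hwl : 1 - w * q ^ l ≠ 0 := sub_ne_zero.2 (hw l hl).symm
  have hdiff : thetaFactor q x y z w l - 1 =
      (z + w - x - y) * (q ^ l / ((1 - z * q ^ l) * (1 - w * q ^ l))) := by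
    rw [thetaFactor, if_neg hl, div_sub_one (mul_ne_zero hzl hwl), ← mul_div_assoc]
    congr 1
    linear_combination (q ^ l) ^ 2 * h
  rw [hdiff, norm_norm]

theorem prod_thetaFactor (q x y z w : ℂ) (S : Finset ℤ) :
    ∏ l ∈ S, thetaFactor q x y z w l = puncturedQProd q S x * puncturedQProd q S y /
      (puncturedQProd q S z * puncturedQProd q S w) := by
  rw [← prod_erase S (f := thetaFactor q x y z w) (a := 0) (if_pos rfl)]
  simp only [puncturedQProd, ← prod_mul_distrib, ← prod_div_distrib]
  exact prod_congr rfl fun l hl => if_neg (ne_of_mem_erase hl)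

end ReducedTheta

theorem sum_eval_div_sub_node_mul_prod {F ι : Type*} [Field F] [DecidableEq ι] {s : Finset ι}
    {v : ι → F} (hv : Set.InjOn v s) {f : Polynomial F} (hf : f.degree < #s) {x : F}
    (hx : ∀ i ∈ s, x ≠ v i) :
    ∑ i ∈ s, f.eval (v i) / ((x - v i) * ∏ j ∈ s.erase i, (v i - v j)) =
      f.eval x / ∏ i ∈ s, (x - v i) := by
  have hprod : ∏ i ∈ s, (x - v i) ≠ 0 := prod_ne_zero_iff.2 fun i hi => sub_ne_zero.2 (hx i hi)
  have key := Lagrange.eval_interpolate_not_at_node (fun i => f.eval (v i)) hx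
  rw [← Lagrange.eq_interpolate hv hf, Lagrange.eval_nodal] at key
  rw [key, mul_div_cancel_left₀ _ hprod]
  refine sum_congr rfl fun i _ => ?_
  rw [Lagrange.nodalWeight, prod_inv_distrib, div_eq_mul_inv, mul_inv]
  ring

/-- The nodes `y q ^ j + a / (y q ^ j)`, at which `z + a / z` is evaluated along the geometric
progression `z = y q ^ j`. -/
noncomputable def qNode (q a y : ℂ) (j : ℤ) : ℂ := y * q ^ j + a / (y * q ^ j)

/-- The `k`-dependent factor of the Lagrange weight of the node `qNode q a a k`, in the limit of all
nodes. -/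
noncomputable def nodeWeight (q a : ℂ) (k : ℤ) : ℂ := q ^ (-k) * (1 - a * q ^ (2 * k))

section QNode

variable {q a x y : ℂ}

theorem qNode_sub_qNode (hq0 : q ≠ 0) (ha0 : a ≠ 0) (hx0 : x ≠ 0) (hy0 : y ≠ 0) (n j : ℤ) :
    qNode q a x n - qNode q a y j =
      a / (x * q ^ n) * ((1 - x / y * q ^ (n - j)) * (1 - x * y / a * q ^ (n + j))) := by
  have := zpow_ne_zero n hq0
  have := zpow_ne_zero j hq0
  rw [qNode, qNode, zpow_sub₀ hq0, zpow_add₀ hq0]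
  field_simp
  ring

theorem qNode_ne_qNode (hq0 : q ≠ 0) (ha0 : a ≠ 0) (hx0 : x ≠ 0) (hy0 : y ≠ 0) {n j : ℤ}
    (h₁ : x / y * q ^ (n - j) ≠ 1) (h₂ : x * y / a * q ^ (n + j) ≠ 1) :
    qNode q a x n ≠ qNode q a y j := by
  rw [← sub_ne_zero, qNode_sub_qNode hq0 ha0 hx0 hy0]
  exact mul_ne_zero (div_ne_zero ha0 (mul_ne_zero hx0 (zpow_ne_zero n hq0)))
    (mul_ne_zero (sub_ne_zero.2 h₁.symm) (sub_ne_zero.2 h₂.symm))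

theorem qNode_self_ne_qNode (hq0 : q ≠ 0) (ha0 : a ≠ 0) (hy0 : y ≠ 0) (hy : NotQPower q y)
    (hay : NotQPower q (a / y)) (k j : ℤ) : qNode q a a k ≠ qNode q a y j :=
  qNode_ne_qNode hq0 ha0 ha0 hy0 (hay _) (by rw [mul_div_cancel_left₀ _ ha0]; exact hy _)

theorem qNode_self_injective (hq0 : q ≠ 0) (hq : ‖q‖ < 1) (ha0 : a ≠ 0) (ha : NotQPower q a) :
    Function.Injective (qNode q a a) := fun k i => by
  contrapose
  refine fun hki => qNode_ne_qNode hq0 ha0 ha0 ha0 ?_ ?_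
  · rw [div_self ha0, one_mul]
    exact zpow_ne_one_of_norm_lt_one hq (sub_ne_zero.2 hki)
  · rw [mul_div_cancel_left₀ _ ha0]
    exact ha _

theorem prod_Icc_neg_sub {M : Type*} [CommMonoid M] (h : ℤ → M) (n N : ℤ) :
    ∏ j ∈ Icc (-N) N, h (n - j) = ∏ l ∈ Icc (n - N) (n + N), h l :=
  prod_nbij' (n - ·) (n - ·) (by simp; lia) (by simp; lia) (by simp) (by simp) (by simp)

theorem prod_Icc_neg_add {M : Type*} [CommMonoid M] (h : ℤ → M) (n N : ℤ) :
    ∏ j ∈ Icc (-N) N, h (n + j) = ∏ l ∈ Icc (n - N) (n + N), h l :=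
  prod_nbij' (n + ·) (· - n) (by simp; lia) (by simp; lia) (by simp) (by simp) (by simp)

theorem one_sub_mul_puncturedQProd {S : Finset ℤ} (hS : 0 ∈ S) (z : ℂ) :
    (1 - z) * puncturedQProd q S z = ∏ l ∈ S, (1 - z * q ^ l) := by
  rw [puncturedQProd, ← mul_prod_erase S _ hS, zpow_zero, mul_one]

theorem puncturedQProd_ne_zero {z : ℂ} (hz : ∀ l : ℤ, l ≠ 0 → z * q ^ l ≠ 1) (S : Finset ℤ) :
    puncturedQProd q S z ≠ 0 :=
  prod_ne_zero_iff.2 fun l hl => sub_ne_zero.2 (hz l (ne_of_mem_erase hl)).symm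

theorem prod_Icc_qNode_sub_qNode (hq0 : q ≠ 0) (ha0 : a ≠ 0) (hx0 : x ≠ 0) (hy0 : y ≠ 0) {n : ℤ}
    {N : ℕ} (hn : n ∈ Icc (-N : ℤ) N) :
    ∏ j ∈ Icc (-N : ℤ) N, (qNode q a x n - qNode q a y j) =
      (a / (x * q ^ n)) ^ (2 * N + 1) *
        ((1 - x / y) * puncturedQProd q (Icc (n - N) (n + N)) (x / y) *
          ((1 - x * y / a) * puncturedQProd q (Icc (n - N) (n + N)) (x * y / a))) := by
  have h0 : (0 : ℤ) ∈ Icc (n - N) (n + N) := by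
    rw [mem_Icc] at hn ⊢
    lia
  have hcard : #(Icc (-N : ℤ) N) = 2 * N + 1 := by
    rw [Int.card_Icc]
    lia
  simp only [qNode_sub_qNode hq0 ha0 hx0 hy0, prod_mul_distrib, prod_const, hcard]
  rw [prod_Icc_neg_sub fun l => 1 - x / y * q ^ l, prod_Icc_neg_add fun l => 1 - x * y / a * q ^ l,
    one_sub_mul_puncturedQProd h0, one_sub_mul_puncturedQProd h0]

theorem prod_Icc_erase_qNode_sub_qNode (hq0 : q ≠ 0) (ha0 : a ≠ 0) (hx0 : x ≠ 0) (hy0 : y ≠ 0)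
    {n : ℤ} {N : ℕ} (hn : n ∈ Icc (-N : ℤ) N) (h2n : x * y / a * q ^ (2 * n) ≠ 1) :
    ∏ j ∈ (Icc (-N : ℤ) N).erase n, (qNode q a x n - qNode q a y j) =
      (a / (x * q ^ n)) ^ (2 * N) *
        (puncturedQProd q (Icc (n - N) (n + N)) (x / y) *
          ((1 - x * y / a) * puncturedQProd q (Icc (n - N) (n + N)) (x * y / a) /
            (1 - x * y / a * q ^ (2 * n)))) := by
  have h0 : (0 : ℤ) ∈ Icc (n - N) (n + N) := by
    rw [mem_Icc] at hn ⊢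
    lia
  have hcard : #((Icc (-N : ℤ) N).erase n) = 2 * N := by
    rw [card_erase_of_mem hn, Int.card_Icc]
    lia
  have hsub : ∏ j ∈ (Icc (-N : ℤ) N).erase n, (1 - x / y * q ^ (n - j)) =
      puncturedQProd q (Icc (n - N) (n + N)) (x / y) :=
    prod_nbij' (n - ·) (n - ·) (by simp; lia) (by simp; lia) (by simp) (by simp) (by simp)
  have hadd := mul_prod_erase _ (fun j => 1 - x * y / a * q ^ (n + j)) hn
  rw [prod_Icc_neg_add fun l => 1 - x * y / a * q ^ l, ← one_sub_mul_puncturedQProd h0,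
    ← two_mul] at hadd
  simp only [qNode_sub_qNode hq0 ha0 hx0 hy0, prod_mul_distrib, prod_const, hcard]
  rw [hsub, eq_div_of_mul_eq (sub_ne_zero.2 h2n.symm) ((mul_comm _ _).trans hadd)]

theorem lagrangeWeight_eq_nodeWeight_mul_prod (hq0 : q ≠ 0) (hq : ‖q‖ < 1) (ha0 : a ≠ 0)
    (hy0 : y ≠ 0) (ha : NotQPower q a) {k : ℤ} {N : ℕ} (hk : k ∈ Icc (-N : ℤ) N) :
    (∏ j ∈ Icc (-N : ℤ) N, (qNode q a a k - qNode q a y j)) /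
        ∏ i ∈ (Icc (-N : ℤ) N).erase k, (qNode q a a k - qNode q a a i) =
      (1 - y) * (1 - a / y) / (1 - a) *
        ((∏ l ∈ Icc (k - N) (k + N), thetaFactor q (a / y) y 1 a l) * nodeWeight q a k) := by
  have hak : a * q ^ (2 * k) ≠ 1 := ha _
  have hpow : a / (a * q ^ k) = q ^ (-k) := by
    rw [div_mul_cancel_left₀ ha0, zpow_neg]
  have hqk := zpow_ne_zero (-k) hq0
  rw [prod_Icc_qNode_sub_qNode hq0 ha0 ha0 hy0 hk, prod_Icc_erase_qNode_sub_qNode hq0 ha0 ha0 ha0 hk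
    (by rwa [mul_div_cancel_left₀ _ ha0]), prod_thetaFactor, hpow, nodeWeight, div_self ha0,
    mul_div_cancel_left₀ _ ha0, mul_div_cancel_left₀ _ ha0]
  have := puncturedQProd_ne_zero (q := q) (z := 1)
    (fun l hl => by simpa using zpow_ne_one_of_norm_lt_one hq hl) (Icc (k - N) (k + N))
  have := puncturedQProd_ne_zero (fun l _ => ha l) (Icc (k - N) (k + N))
  have := ha.one_sub_ne_zero
  have : 1 - a * q ^ (2 * k) ≠ 0 := sub_ne_zero.2 hak.symm
  rw [pow_succ]
  field_simp

end QNode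

section PartialFractions

open Polynomial

variable {q a b c y : ℂ}

/-- The limit of the Lagrange weights divided by `nodeWeight q a k`. -/
noncomputable def nodeWeightConst (q a y : ℂ) : ℂ :=
  (1 - y) * (1 - a / y) / (1 - a) *
    (reducedTheta q (a / y) * reducedTheta q y / (reducedTheta q 1 * reducedTheta q a))

theorem nodeWeightConst_ne_zero (hq : ‖q‖ < 1) (ha0 : a ≠ 0) (hy0 : y ≠ 0) (ha : NotQPower q a)
    (hy : NotQPower q y) (hay : NotQPower q (a / y)) : nodeWeightConst q a y ≠ 0 := by
  have hone : reducedTheta q 1 ≠ 0 := reducedTheta_ne_zero hq one_ne_zero fun l hl => by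
    rw [one_mul]
    exact zpow_ne_one_of_norm_lt_one hq hl
  exact mul_ne_zero
    (div_ne_zero (mul_ne_zero hy.one_sub_ne_zero hay.one_sub_ne_zero) ha.one_sub_ne_zero)
    (div_ne_zero (mul_ne_zero (reducedTheta_ne_zero hq (div_ne_zero ha0 hy0) fun l _ => hay l)
      (reducedTheta_ne_zero hq hy0 fun l _ => hy l))
      (mul_ne_zero hone (reducedTheta_ne_zero hq ha0 fun l _ => ha l)))

theorem tendsto_sum_lagrangeWeight_mul (hq0 : q ≠ 0) (hq : ‖q‖ < 1) (ha0 : a ≠ 0) (hy0 : y ≠ 0)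
    (ha : NotQPower q a) {φ : ℤ → ℂ} (hφ : Summable fun k => nodeWeight q a k * φ k) :
    Tendsto (fun N : ℕ => ∑ k ∈ Icc (-N : ℤ) N,
      (∏ j ∈ Icc (-N : ℤ) N, (qNode q a a k - qNode q a y j)) /
        (∏ i ∈ (Icc (-N : ℤ) N).erase k, (qNode q a a k - qNode q a a i)) * φ k) atTop
      (𝓝 (nodeWeightConst q a y * ∑' k, nodeWeight q a k * φ k)) := by
  have hone (l : ℤ) (hl : l ≠ 0) : 1 * q ^ l ≠ 1 := by
    rw [one_mul]
    exact zpow_ne_one_of_norm_lt_one hq hl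
  have ha' (l : ℤ) (_ : l ≠ 0) : a * q ^ l ≠ 1 := ha l
  have hzeros : a / y * y = 1 * a := by rw [div_mul_cancel₀ a hy0, one_mul]
  have key := (tendsto_sum_prod_Icc_mul
    (summable_norm_thetaFactor_sub_one hq0 hq one_ne_zero ha0 hzeros hone ha')
    (hasProd_thetaFactor hq0 hq (div_ne_zero ha0 hy0) hy0 one_ne_zero ha0 hzeros hone ha')
    hφ.norm).const_mul ((1 - y) * (1 - a / y) / (1 - a))
  rw [nodeWeightConst, mul_assoc]
  refine key.congr fun N => ?_
  rw [mul_sum]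
  refine sum_congr rfl fun k hk => ?_
  rw [lagrangeWeight_eq_nodeWeight_mul_prod hq0 hq ha0 hy0 ha hk]
  ring

theorem tsum_nodeWeight_mul_eval_div_prod_eq_zero (hq0 : q ≠ 0) (hq : ‖q‖ < 1) (ha0 : a ≠ 0)
    (hy0 : y ≠ 0) (ha : NotQPower q a) (hy : NotQPower q y) (hay : NotQPower q (a / y))
    {p : ℂ[X]} {J : Finset ℤ} (hp : p.natDegree + 2 ≤ #J)
    (hsum : Summable fun k => nodeWeight q a k *
      (p.eval (qNode q a a k) / ∏ j ∈ J, (qNode q a a k - qNode q a y j))) :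
    ∑' k, nodeWeight q a k *
      (p.eval (qNode q a a k) / ∏ j ∈ J, (qNode q a a k - qNode q a y j)) = 0 := by
  have key := tendsto_sum_lagrangeWeight_mul hq0 hq ha0 hy0 ha hsum
  refine (mul_eq_zero.1 (tendsto_nhds_unique (key.congr' ?_) tendsto_const_nhds)).resolve_left
    (nodeWeightConst_ne_zero hq ha0 hy0 ha hy hay)
  filter_upwards [(tendsto_Icc_neg (R := ℤ)).eventually_ge_atTop J] with N hJ
  let P : ℂ[X] := (∏ j ∈ Icc (-N : ℤ) N \ J, (X - C (qNode q a y j))) * p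
  have hP : P.natDegree + 1 < #(Icc (-N : ℤ) N) := by
    have hle : P.natDegree ≤ #(Icc (-N : ℤ) N \ J) + p.natDegree := by
      refine natDegree_mul_le.trans_eq ?_
      rw [natDegree_prod_of_monic _ _ fun j _ => monic_X_sub_C _]
      simp
    have hcard := card_sdiff_add_card_eq_card hJ
    lia
  have hcoeff := Lagrange.coeff_eq_sum (P := P) (qNode_self_injective hq0 hq ha0 ha).injOn
    (degree_le_natDegree.trans_lt (by exact_mod_cast (Nat.lt_succ_self _).trans hP))
  rw [coeff_eq_zero_of_natDegree_lt (by lia)] at hcoeff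
  refine hcoeff.symm ▸ sum_congr rfl fun k _ => ?_
  have hJ0 : ∏ j ∈ J, (qNode q a a k - qNode q a y j) ≠ 0 := prod_ne_zero_iff.2 fun j _ =>
    sub_ne_zero.2 (qNode_self_ne_qNode hq0 ha0 hy0 hy hay k j)
  rw [← prod_sdiff hJ]
  simp only [P, eval_mul, eval_prod, eval_sub, eval_X, eval_C]
  field_simp

theorem sum_lagrangeWeight_mul_one_div (hq0 : q ≠ 0) (hq : ‖q‖ < 1) (ha0 : a ≠ 0) (hb0 : b ≠ 0)
    (hc0 : c ≠ 0) (ha : NotQPower q a) (hb : NotQPower q b) (hc : NotQPower q c)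
    (hab : NotQPower q (a / b)) (hac : NotQPower q (a / c)) {n : ℤ}
    (h2n : b * c / a * q ^ (2 * n) ≠ 1) {N : ℕ} (hn : n ∈ Icc (-N : ℤ) N) :
    ∑ k ∈ Icc (-N : ℤ) N, (∏ j ∈ Icc (-N : ℤ) N, (qNode q a a k - qNode q a c j)) /
        (∏ i ∈ (Icc (-N : ℤ) N).erase k, (qNode q a a k - qNode q a a i)) *
        (1 / ((qNode q a b n - qNode q a a k) * (qNode q a a k - qNode q a c n))) =
      b * q ^ n / a * (1 - b * c / a) /
          ((1 - b * c / a * q ^ (2 * n)) * (1 - b / a) * (1 - b)) *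
        ∏ l ∈ Icc (n - N) (n + N), thetaFactor q (b / c) (b * c / a) (b / a) b l := by
  let f : ℂ[X] := ∏ j ∈ (Icc (-N : ℤ) N).erase n, (X - C (qNode q a c j))
  have hf : f.degree < #(Icc (-N : ℤ) N) := by
    rw [degree_prod_of_monic _ _ fun j _ => monic_X_sub_C _]
    simp only [degree_X_sub_C, sum_const, nsmul_one]
    exact_mod_cast card_erase_lt_of_mem hn
  have hfeval (x : ℂ) : f.eval x = ∏ j ∈ (Icc (-N : ℤ) N).erase n, (x - qNode q a c j) := by
    simp only [f, eval_prod, eval_sub, eval_X, eval_C]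
  have hba : NotQPower q (b / a) := inv_div a b ▸ hab.inv
  calc
    _ = ∑ k ∈ Icc (-N : ℤ) N, f.eval (qNode q a a k) / ((qNode q a b n - qNode q a a k) *
          ∏ i ∈ (Icc (-N : ℤ) N).erase k, (qNode q a a k - qNode q a a i)) := by
      refine sum_congr rfl fun k _ => ?_
      have hk := sub_ne_zero.2 (qNode_self_ne_qNode hq0 ha0 hc0 hc hac k n)
      rw [← mul_prod_erase _ _ hn, hfeval]
      field_simp
    _ = f.eval (qNode q a b n) / ∏ k ∈ Icc (-N : ℤ) N, (qNode q a b n - qNode q a a k) :=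
      sum_eval_div_sub_node_mul_prod (qNode_self_injective hq0 hq ha0 ha).injOn hf
        fun k _ => (qNode_self_ne_qNode hq0 ha0 hb0 hb hab k n).symm
    _ = _ := by
      rw [hfeval, prod_Icc_erase_qNode_sub_qNode hq0 ha0 hb0 hc0 hn h2n,
        prod_Icc_qNode_sub_qNode hq0 ha0 hb0 ha0 hn, mul_div_cancel_right₀ _ ha0, prod_thetaFactor]
      have := puncturedQProd_ne_zero (fun l _ => hba l) (Icc (n - N) (n + N))
      have := puncturedQProd_ne_zero (fun l _ => hb l) (Icc (n - N) (n + N))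
      have := hba.one_sub_ne_zero
      have := hb.one_sub_ne_zero
      have := sub_ne_zero.2 h2n.symm
      have := zpow_ne_zero n hq0
      rw [pow_succ]
      field_simp

theorem nodeWeightConst_mul_tsum_nodeWeight_div (hq0 : q ≠ 0) (hq : ‖q‖ < 1) (ha0 : a ≠ 0)
    (hb0 : b ≠ 0) (hc0 : c ≠ 0) (ha : NotQPower q a) (hb : NotQPower q b) (hc : NotQPower q c)
    (hab : NotQPower q (a / b)) (hac : NotQPower q (a / c)) {n : ℤ}
    (h2n : b * c / a * q ^ (2 * n) ≠ 1)
    (hsum : Summable fun k => nodeWeight q a k *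
      (1 / ((qNode q a b n - qNode q a a k) * (qNode q a a k - qNode q a c n)))) :
    nodeWeightConst q a c * ∑' k, nodeWeight q a k *
      (1 / ((qNode q a b n - qNode q a a k) * (qNode q a a k - qNode q a c n))) =
    b * q ^ n / a * (1 - b * c / a) /
        ((1 - b * c / a * q ^ (2 * n)) * (1 - b / a) * (1 - b)) *
      (reducedTheta q (b / c) * reducedTheta q (b * c / a) /
        (reducedTheta q (b / a) * reducedTheta q b)) := by
  have hba : NotQPower q (b / a) := inv_div a b ▸ hab.inv
  have hzeros : b / c * (b * c / a) = b / a * b := by field_simp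
  have hlim := ((hasProd_thetaFactor hq0 hq (div_ne_zero hb0 hc0)
    (div_ne_zero (mul_ne_zero hb0 hc0) ha0) (div_ne_zero hb0 ha0) hb0 hzeros
    (fun l _ => hba l) fun l _ => hb l).comp (tendsto_Icc_sub_add_atTop n)).const_mul
    (b * q ^ n / a * (1 - b * c / a) / ((1 - b * c / a * q ^ (2 * n)) * (1 - b / a) * (1 - b)))
  refine tendsto_nhds_unique (tendsto_sum_lagrangeWeight_mul hq0 hq ha0 hc0 ha hsum)
    (hlim.congr' ?_)
  filter_upwards [(tendsto_Icc_neg (R := ℤ)).eventually_ge_atTop {n}] with N hN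
  exact (sum_lagrangeWeight_mul_one_div hq0 hq ha0 hb0 hc0 ha hb hc hab hac h2n
    (singleton_subset_iff.1 hN)).symm

end PartialFractions

section QPoch

variable {q z : ℂ}

theorem qPoch_zero (z q : ℂ) : qPoch z q 0 = 1 := by simp [qPoch]

theorem qPoch_neg_natCast (z q : ℂ) (n : ℕ) :
    qPoch z q (-n) = (∏ j ∈ range n, (1 - z * q ^ (-(j : ℤ) - 1)))⁻¹ := by
  rcases n.eq_zero_or_pos with rfl | hn
  · simp [qPoch]
  · rw [qPoch, if_neg (by lia), neg_neg, Int.toNat_natCast]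

theorem qPoch_natCast (z q : ℂ) (n : ℕ) : qPoch z q n = ∏ j ∈ range n, (1 - z * q ^ j) := by
  rw [qPoch, if_pos n.cast_nonneg, Int.toNat_natCast]

theorem NotQPower.qPoch_add_one (hz : NotQPower q z) (k : ℤ) :
    qPoch z q (k + 1) = qPoch z q k * (1 - z * q ^ k) := by
  obtain ⟨n, rfl | rfl⟩ := k.eq_nat_or_neg
  · rw [← Nat.cast_add_one, qPoch_natCast, qPoch_natCast, prod_range_succ, zpow_natCast]
  · cases n with
    | zero => simp [qPoch]
    | succ n =>
      have hpow : -(n : ℤ) - 1 = -((n + 1 : ℕ) : ℤ) := by lia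
      have hsucc : -((n + 1 : ℕ) : ℤ) + 1 = -(n : ℤ) := by lia
      rw [hsucc, qPoch_neg_natCast, qPoch_neg_natCast, prod_range_succ, mul_inv, hpow,
        inv_mul_cancel_right₀ (hz.one_sub_mul_zpow_ne_zero _)]

theorem NotQPower.qPoch_ne_zero (hz : NotQPower q z) (k : ℤ) : qPoch z q k ≠ 0 := by
  have hfactor (j : ℤ) := hz.one_sub_mul_zpow_ne_zero j
  unfold qPoch
  split_ifs
  · exact prod_ne_zero_iff.2 fun j _ => by exact_mod_cast hfactor j
  · exact inv_ne_zero (prod_ne_zero_iff.2 fun j _ => hfactor _)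

theorem notQPower_of_qPoch_ne_zero (h : ∀ m : ℤ, qPoch z q m ≠ 0) : NotQPower q z := fun k hk => by
  obtain ⟨n, rfl | rfl⟩ := k.eq_nat_or_neg
  · refine h (n + 1 : ℕ) ?_
    rw [qPoch_natCast, prod_range_succ, ← zpow_natCast, hk, sub_self, mul_zero]
  · cases n with
    | zero =>
      refine h (1 : ℕ) ?_
      rw [qPoch_natCast, prod_range_one]
      simpa [sub_eq_zero] using hk.symm
    | succ n =>
      refine h (-(n + 1 : ℕ)) ?_
      have hpow : -(n : ℤ) - 1 = -((n + 1 : ℕ) : ℤ) := by lia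
      rw [qPoch_neg_natCast, prod_range_succ, hpow, hk, sub_self, mul_zero, inv_zero]

theorem NotQPower.one_sub_mul_qPoch_mul_self (hq0 : q ≠ 0) (hz : NotQPower q z) (k : ℤ) :
    (1 - z) * qPoch (z * q) q k = qPoch z q (k + 1) := by
  have hzq := hz.mul_self hq0
  have hfactor (k : ℤ) : 1 - z * q * q ^ k = 1 - z * q ^ (k + 1) := by
    rw [mul_assoc, ← zpow_one_add₀ hq0, add_comm]
  induction k using Int.induction_on with
  | zero => rw [hz.qPoch_add_one, qPoch_zero, qPoch_zero, zpow_zero, mul_one, mul_one, one_mul]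
  | succ k ih => rw [hz.qPoch_add_one, hzq.qPoch_add_one, ← ih, hfactor, mul_assoc]
  | pred k ih =>
    have hk := hzq.one_sub_mul_zpow_ne_zero (-(k : ℤ) - 1)
    rw [← sub_add_cancel (-(k : ℤ)) 1, hzq.qPoch_add_one, hz.qPoch_add_one, ← hfactor,
      ← mul_assoc] at ih
    exact mul_right_cancel₀ hk ih

theorem conj_qPoch (q : ℝ) (z : ℂ) (k : ℤ) :
    (starRingEnd ℂ) (qPoch z q k) = qPoch ((starRingEnd ℂ) z) q k := by
  unfold qPoch
  split_ifs <;> simp [map_prod, map_inv₀, map_zpow₀]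

end QPoch

section QNodePoch

variable {q a y : ℂ}

/-- A multiplicative antidifference in `n` of the factor `q ^ k (X - Y_n)`, where `X` and `Y_n`
are the nodes `qNode q a a k` and `qNode q a y n`. -/
noncomputable def qNodePoch (q a y : ℂ) (k n : ℤ) : ℂ :=
  qPoch y q (n + k) / qPoch (a / y) q (k - n + 1)

theorem qNodePoch_ne_zero (hy : NotQPower q y) (hay : NotQPower q (a / y)) (k n : ℤ) :
    qNodePoch q a y k n ≠ 0 :=
  div_ne_zero (hy.qPoch_ne_zero _) (hay.qPoch_ne_zero _)

theorem qNodePoch_add_one (hq0 : q ≠ 0) (ha0 : a ≠ 0) (hy0 : y ≠ 0) (hy : NotQPower q y)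
    (hay : NotQPower q (a / y)) (k n : ℤ) :
    qNodePoch q a y k (n + 1) =
      qNodePoch q a y k n * (q ^ k * (qNode q a a k - qNode q a y n)) := by
  have hfactor : q ^ k * (qNode q a a k - qNode q a y n) =
      (1 - a / y * q ^ (k - n)) * (1 - y * q ^ (n + k)) := by
    rw [qNode_sub_qNode hq0 ha0 ha0 hy0, div_mul_cancel_left₀ ha0, mul_div_cancel_left₀ _ ha0,
      mul_inv_cancel_left₀ (zpow_ne_zero k hq0), add_comm k]
  have h1 := hay.qPoch_ne_zero (k - n)
  have h2 := hay.one_sub_mul_zpow_ne_zero (k - n)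
  rw [hfactor, qNodePoch, qNodePoch, ← sub_sub, sub_add_cancel, hay.qPoch_add_one, add_right_comm,
    hy.qPoch_add_one, div_mul_eq_mul_div, div_eq_div_iff h1 (mul_ne_zero h1 h2)]
  ring

theorem qNodePoch_div_qNodePoch (hq0 : q ≠ 0) (ha0 : a ≠ 0) (hy0 : y ≠ 0) (hy : NotQPower q y)
    (hay : NotQPower q (a / y)) (k : ℤ) {m n : ℤ} (hmn : m ≤ n) :
    qNodePoch q a y k n / qNodePoch q a y k m =
      (q ^ k) ^ (n - m) * ∏ j ∈ Ico m n, (qNode q a a k - qNode q a y j) := by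
  induction n, hmn using Int.leInduction with
  | base => simp [qNodePoch_ne_zero hy hay]
  | succ n hmn ih =>
    rw [← insert_Ico_right_eq_Ico_add_one hmn, prod_insert right_notMem_Ico,
      qNodePoch_add_one hq0 ha0 hy0 hy hay, mul_div_right_comm, ih, add_sub_right_comm,
      zpow_add_one₀ (zpow_ne_zero k hq0)]
    ring

end QNodePoch

/-- The parameters `0 < q < 1`, `g`, `b`, `c` are generic: no factor in a numerator or denominator
of the coefficients `F_{n,k}(g,b,c|q)` vanishes. -/
structure IsGeneric (q : ℝ) (g b c : ℂ) : Prop where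
  q_pos : 0 < q
  q_lt_one : q < 1
  g_ne_zero : g ≠ 0
  b_ne_zero : b ≠ 0
  c_ne_zero : c ≠ 0
  notQPower_sq_g : NotQPower q (g ^ 2)
  notQPower_b : NotQPower q b
  notQPower_c : NotQPower q c
  notQPower_div_b : NotQPower q (g ^ 2 / b)
  notQPower_div_c : NotQPower q (g ^ 2 / c)

/-- The factor of `F_{n,k}(g,b,c|q) F_{m,k}(-g,c,b|q)` that does not depend on `n`, `m` and `k`. -/
noncomputable def pairingConst (g b c : ℂ) : ℂ :=
  (1 - b) * (1 - g ^ 2 / b) * ((1 - c) * (1 - g ^ 2 / c)) / (1 - g ^ 2)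

theorem hnorm_eq_reducedTheta (q : ℝ) (g b c : ℂ) (n : ℤ) :
    hnorm q g b c n =
      reducedTheta q 1 * reducedTheta q (g ^ 2) * reducedTheta q (b / c) *
          reducedTheta q (b * c / g ^ 2) /
        (reducedTheta q (g ^ 2 / c) * reducedTheta q c * reducedTheta q (b / g ^ 2) *
          reducedTheta q b) *
      ((1 - b * c / g ^ 2) / (1 - b * c / g ^ 2 * (q : ℂ) ^ (2 * n))) * (q : ℂ) ^ n := by
  simp only [hnorm, reducedTheta, one_mul, div_one, div_div_eq_mul_div, div_mul_eq_mul_div,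
    mul_comm (q : ℂ)]
  ring

namespace IsGeneric

variable {q : ℝ} {g b c : ℂ} (h : IsGeneric q g b c)

include h

theorem symm : IsGeneric q (-g) c b where
  q_pos := h.q_pos
  q_lt_one := h.q_lt_one
  g_ne_zero := neg_ne_zero.2 h.g_ne_zero
  b_ne_zero := h.c_ne_zero
  c_ne_zero := h.b_ne_zero
  notQPower_sq_g := by simpa using h.notQPower_sq_g
  notQPower_b := h.notQPower_c
  notQPower_c := h.notQPower_b
  notQPower_div_b := by simpa using h.notQPower_div_c
  notQPower_div_c := by simpa using h.notQPower_div_b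

theorem q_ne_zero : (q : ℂ) ≠ 0 := by exact_mod_cast h.q_pos.ne'

theorem norm_q_lt_one : ‖(q : ℂ)‖ < 1 := by
  rw [Complex.norm_real, Real.norm_of_nonneg h.q_pos.le]
  exact h.q_lt_one

theorem sq_g_ne_zero : g ^ 2 ≠ 0 := pow_ne_zero 2 h.g_ne_zero

theorem notQPower_g : NotQPower q g := fun j hj => h.notQPower_sq_g (j * 2) <| by
  rw [zpow_mul, zpow_ofNat, ← mul_pow, hj, one_pow]

theorem sqrt_q_ne_zero : (√q : ℂ) ≠ 0 := by exact_mod_cast (Real.sqrt_pos.2 h.q_pos).ne'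

theorem sqrt_q_mul_self : (√q : ℂ) * √q = q := by
  exact_mod_cast Real.mul_self_sqrt h.q_pos.le

theorem notQPower_c_mul_q : NotQPower q (c * q) := h.notQPower_c.mul_self h.q_ne_zero

theorem notQPower_div_b_mul_q : NotQPower q (g ^ 2 * q / b) := by
  rw [mul_div_right_comm]
  exact h.notQPower_div_b.mul_self h.q_ne_zero

theorem Fnk_ne_zero (n k : ℤ) : Fnk q g b c n k ≠ 0 :=
  mul_ne_zero
    (mul_ne_zero
      (div_ne_zero (h.notQPower_g.one_sub_mul_zpow_ne_zero k) h.notQPower_g.one_sub_ne_zero)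
      (div_ne_zero
        (mul_ne_zero (h.notQPower_b.qPoch_ne_zero _) (h.notQPower_div_c.qPoch_ne_zero _))
        (mul_ne_zero (h.notQPower_c_mul_q.qPoch_ne_zero _)
          (h.notQPower_div_b_mul_q.qPoch_ne_zero _))))
    (zpow_ne_zero k h.sqrt_q_ne_zero)

theorem Fnk_add_one_div_Fnk (n k : ℤ) :
    Fnk q g b c n (k + 1) / Fnk q g b c n k = √q *
      ((1 - g * q * (q : ℂ) ^ k) / (1 - g * (q : ℂ) ^ k)) *
      ((1 - b * (q : ℂ) ^ n * (q : ℂ) ^ k) / (1 - c * q * (q : ℂ) ^ n * (q : ℂ) ^ k)) *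
      ((1 - g ^ 2 / c * (q : ℂ) ^ (-n) * (q : ℂ) ^ k) /
        (1 - g ^ 2 * q / b * (q : ℂ) ^ (-n) * (q : ℂ) ^ k)) := by
  have hplus (z : ℂ) : z * (q : ℂ) ^ n * (q : ℂ) ^ k = z * (q : ℂ) ^ (n + k) := by
    rw [mul_assoc, zpow_add₀ h.q_ne_zero]
  have hminus (z : ℂ) : z * (q : ℂ) ^ (-n) * (q : ℂ) ^ k = z * (q : ℂ) ^ (k - n) := by
    rw [mul_assoc, ← zpow_add₀ h.q_ne_zero, neg_add_eq_sub]
  rw [div_eq_iff (h.Fnk_ne_zero n k), hplus, hplus, hminus, hminus, Fnk, Fnk, ← add_assoc,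
    add_sub_right_comm, h.notQPower_b.qPoch_add_one, h.notQPower_c_mul_q.qPoch_add_one,
    h.notQPower_div_c.qPoch_add_one, h.notQPower_div_b_mul_q.qPoch_add_one,
    zpow_add_one₀ h.sqrt_q_ne_zero, zpow_add_one₀ h.q_ne_zero, mul_comm _ (q : ℂ)]
  rw [← div_mul_div_cancel₀ (a := 1 - g * ((q : ℂ) * (q : ℂ) ^ k)) (c := 1 - g)
    (h.notQPower_g.one_sub_mul_zpow_ne_zero k)]
  simp only [div_eq_mul_inv, mul_inv]
  ring

theorem tendsto_Fnk_add_one_div_Fnk_atTop (n : ℤ) :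
    Tendsto (fun k => Fnk q g b c n (k + 1) / Fnk q g b c n k) atTop (𝓝 √q) := by
  have hlim := tendsto_one_sub_div_one_sub_atTop h.norm_q_lt_one
  simpa [h.Fnk_add_one_div_Fnk] using (((hlim (g * q) g).const_mul (√q : ℂ)).mul
    (hlim (b * (q : ℂ) ^ n) (c * q * (q : ℂ) ^ n))).mul
    (hlim (g ^ 2 / c * (q : ℂ) ^ (-n)) (g ^ 2 * q / b * (q : ℂ) ^ (-n)))

theorem tendsto_Fnk_add_one_div_Fnk_atBot (n : ℤ) :
    Tendsto (fun k => Fnk q g b c n (k + 1) / Fnk q g b c n k) atBot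
      (𝓝 (√q / q * (b / c) ^ 2)) := by
  have hg0 := h.g_ne_zero
  have hb0 := h.b_ne_zero
  have hc0 := h.c_ne_zero
  have hq0 := h.q_ne_zero
  have hqn := zpow_ne_zero n hq0
  have hqn' := zpow_ne_zero (-n) hq0
  have hlim := tendsto_one_sub_div_one_sub_atBot h.norm_q_lt_one hq0
  have key := (((hlim (g * q) hg0).const_mul (√q : ℂ)).mul
    (hlim (b * (q : ℂ) ^ n) (mul_ne_zero (mul_ne_zero hc0 hq0) hqn))).mul
    (hlim (g ^ 2 / c * (q : ℂ) ^ (-n))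
      (mul_ne_zero (div_ne_zero (mul_ne_zero h.sq_g_ne_zero hq0) hb0) hqn'))
  simp only [← h.Fnk_add_one_div_Fnk] at key
  convert key using 2
  field_simp

theorem summable_Fnk (hbc : ‖b‖ = ‖c‖) (n : ℤ) : Summable (Fnk q g b c n) := by
  have hsqrt : ‖(√q : ℂ)‖ < 1 := by
    rw [Complex.norm_real, Real.norm_of_nonneg (Real.sqrt_nonneg q), Real.sqrt_lt' one_pos, one_pow]
    exact h.q_lt_one
  refine summable_int_of_tendsto_ratio (.of_forall (h.Fnk_ne_zero n)) hsqrt ?_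
    (h.tendsto_Fnk_add_one_div_Fnk_atTop n) (h.tendsto_Fnk_add_one_div_Fnk_atBot n)
  rw [← h.sqrt_q_mul_self, div_mul_cancel_left₀ h.sqrt_q_ne_zero, norm_mul, norm_pow, norm_div, hbc,
    div_self (norm_ne_zero_iff.2 h.c_ne_zero), one_pow, mul_one, norm_inv]
  exact (one_lt_inv₀ (norm_pos_iff.2 h.sqrt_q_ne_zero)).2 hsqrt

theorem summable_Fnk_mul_Fnk_neg (n m : ℤ) :
    Summable fun k => Fnk q g b c n k * Fnk q (-g) c b m k := by
  refine summable_int_of_tendsto_ratio (r := (q : ℂ)) (s := (q : ℂ)⁻¹)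
    (.of_forall fun k => mul_ne_zero (h.Fnk_ne_zero n k) (h.symm.Fnk_ne_zero m k)) h.norm_q_lt_one
    ?_ ?_ ?_
  · rw [norm_inv]
    exact (one_lt_inv₀ (norm_pos_iff.2 h.q_ne_zero)).2 h.norm_q_lt_one
  · rw [← h.sqrt_q_mul_self]
    exact ((h.tendsto_Fnk_add_one_div_Fnk_atTop n).mul
      (h.symm.tendsto_Fnk_add_one_div_Fnk_atTop m)).congr fun k => div_mul_div_comm _ _ _ _
  · have hlimit : √q / q * (b / c) ^ 2 * (√q / q * (c / b) ^ 2) = (q : ℂ)⁻¹ := by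
      have hb0 := h.b_ne_zero
      have hc0 := h.c_ne_zero
      have hq0 := h.q_ne_zero
      field_simp
      rw [sq, h.sqrt_q_mul_self]
    rw [← hlimit]
    exact ((h.tendsto_Fnk_add_one_div_Fnk_atBot n).mul
      (h.symm.tendsto_Fnk_add_one_div_Fnk_atBot m)).congr fun k => div_mul_div_comm _ _ _ _

theorem Fnk_mul_Fnk_neg (n m k : ℤ) :
    Fnk q g b c n k * Fnk q (-g) c b m k =
      pairingConst g b c * ((q : ℂ) ^ k * (1 - g ^ 2 * (q : ℂ) ^ (2 * k))) *
        (qNodePoch q (g ^ 2) b k n / qNodePoch q (g ^ 2) b k (m + 1) *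
          (qNodePoch q (g ^ 2) c k m / qNodePoch q (g ^ 2) c k (n + 1))) := by
  have hshift {z : ℂ} (hz : NotQPower q z) (j : ℤ) :
      qPoch (z * q) q j = qPoch z q (j + 1) / (1 - z) := by
    rw [eq_div_iff hz.one_sub_ne_zero, mul_comm, hz.one_sub_mul_qPoch_mul_self h.q_ne_zero]
  have hgg : (1 - g) * (1 + g) = 1 - g ^ 2 := by ring
  have hnum : (q : ℂ) ^ k * (1 - g ^ 2 * (q : ℂ) ^ (2 * k)) =
      (√q : ℂ) ^ k * (√q : ℂ) ^ k * ((1 - g * (q : ℂ) ^ k) * (1 + g * (q : ℂ) ^ k)) := by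
    rw [← mul_zpow, h.sqrt_q_mul_self, mul_comm 2 k, zpow_mul, zpow_ofNat]
    ring
  simp only [Fnk, pairingConst, qNodePoch, neg_sq, mul_div_right_comm _ (q : ℂ),
    hshift h.notQPower_b, hshift h.notQPower_c, hshift h.notQPower_div_b, hshift h.notQPower_div_c,
    neg_mul, sub_neg_eq_add, ← sub_sub, sub_add_cancel, add_right_comm _ (1 : ℤ), hnum, ← hgg]
  simp only [div_eq_mul_inv, mul_inv, inv_inv]
  ring

theorem pairingConst_ne_zero : pairingConst g b c ≠ 0 :=
  div_ne_zero
    (mul_ne_zero (mul_ne_zero h.notQPower_b.one_sub_ne_zero h.notQPower_div_b.one_sub_ne_zero)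
      (mul_ne_zero h.notQPower_c.one_sub_ne_zero h.notQPower_div_c.one_sub_ne_zero))
    h.notQPower_sq_g.one_sub_ne_zero

theorem Fnk_mul_Fnk_neg_of_lt {m n : ℤ} (hmn : m < n) (k : ℤ) :
    Fnk q g b c n k * Fnk q (-g) c b m k =
      pairingConst g b c * (nodeWeight q (g ^ 2) k *
        ((∏ j ∈ Ico (m + 1) n, (qNode q (g ^ 2) (g ^ 2) k - qNode q (g ^ 2) b j)) /
          ∏ j ∈ Ico m (n + 1), (qNode q (g ^ 2) (g ^ 2) k - qNode q (g ^ 2) c j))) := by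
  have hpow : (q : ℂ) ^ k * ((q : ℂ) ^ k) ^ (n - (m + 1)) / ((q : ℂ) ^ k) ^ (n + 1 - m) =
      (q : ℂ) ^ (-k) := by
    have hqk := zpow_ne_zero k h.q_ne_zero
    rw [← zpow_one_add₀ hqk, ← zpow_sub₀ hqk, ← zpow_mul]
    congr 1
    ring
  rw [h.Fnk_mul_Fnk_neg,
    ← inv_div (qNodePoch (q : ℂ) (g ^ 2) c k (n + 1)),
    qNodePoch_div_qNodePoch h.q_ne_zero h.sq_g_ne_zero h.b_ne_zero h.notQPower_b h.notQPower_div_b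
      k (by lia),
    qNodePoch_div_qNodePoch h.q_ne_zero h.sq_g_ne_zero h.c_ne_zero h.notQPower_c h.notQPower_div_c
      k (by lia), nodeWeight, ← hpow]
  simp only [div_eq_mul_inv, mul_inv]
  ring

theorem tsum_Fnk_mul_Fnk_neg_of_lt {m n : ℤ} (hmn : m < n) :
    ∑' k, Fnk q g b c n k * Fnk q (-g) c b m k = 0 := by
  let p : Polynomial ℂ := ∏ j ∈ Ico (m + 1) n, (.X - .C (qNode q (g ^ 2) b j))
  have hp : p.natDegree + 2 ≤ #(Ico m (n + 1)) := by
    rw [Polynomial.natDegree_prod_of_monic _ _ fun j _ => Polynomial.monic_X_sub_C _]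
    simp
    lia
  have hterm (k : ℤ) : Fnk q g b c n k * Fnk q (-g) c b m k =
      pairingConst g b c * (nodeWeight q (g ^ 2) k * (p.eval (qNode q (g ^ 2) (g ^ 2) k) /
        ∏ j ∈ Ico m (n + 1), (qNode q (g ^ 2) (g ^ 2) k - qNode q (g ^ 2) c j))) := by
    rw [h.Fnk_mul_Fnk_neg_of_lt hmn]
    simp only [p, Polynomial.eval_prod, Polynomial.eval_sub, Polynomial.eval_X, Polynomial.eval_C]
  have hsum := h.summable_Fnk_mul_Fnk_neg n m
  simp only [hterm] at hsum ⊢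
  rw [summable_mul_left_iff h.pairingConst_ne_zero] at hsum
  rw [tsum_mul_left, tsum_nodeWeight_mul_eval_div_prod_eq_zero h.q_ne_zero h.norm_q_lt_one
    h.sq_g_ne_zero h.c_ne_zero h.notQPower_sq_g h.notQPower_c h.notQPower_div_c hp hsum, mul_zero]

theorem Fnk_mul_Fnk_neg_self (n k : ℤ) :
    Fnk q g b c n k * Fnk q (-g) c b n k =
      -pairingConst g b c * (nodeWeight q (g ^ 2) k *
        (1 / ((qNode q (g ^ 2) b n - qNode q (g ^ 2) (g ^ 2) k) *
          (qNode q (g ^ 2) (g ^ 2) k - qNode q (g ^ 2) c n)))) := by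
  have hb := qNodePoch_ne_zero h.notQPower_b h.notQPower_div_b k n
  have hc := qNodePoch_ne_zero h.notQPower_c h.notQPower_div_c k n
  rw [h.Fnk_mul_Fnk_neg,
    qNodePoch_add_one h.q_ne_zero h.sq_g_ne_zero h.b_ne_zero h.notQPower_b h.notQPower_div_b,
    qNodePoch_add_one h.q_ne_zero h.sq_g_ne_zero h.c_ne_zero h.notQPower_c h.notQPower_div_c,
    div_mul_cancel_left₀ hb, div_mul_cancel_left₀ hc, nodeWeight, zpow_neg,
    ← neg_sub (qNode _ _ b _)]
  have hqk := zpow_ne_zero k h.q_ne_zero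
  field_simp

theorem pairingConst_eq_neg_mul :
    pairingConst g b c = -(g ^ 2 / b) * (1 - b / g ^ 2) * (1 - b) *
      ((1 - c) * (1 - g ^ 2 / c) / (1 - g ^ 2)) := by
  have hinv : 1 - g ^ 2 / b = -(g ^ 2 / b) * (1 - b / g ^ 2) := by
    have hg0 := h.g_ne_zero
    have hb0 := h.b_ne_zero
    field_simp
    ring
  rw [pairingConst, hinv]
  ring

theorem tsum_Fnk_mul_Fnk_neg_self {n : ℤ} (h2n : b * c / g ^ 2 * (q : ℂ) ^ (2 * n) ≠ 1) :
    ∑' k, Fnk q g b c n k * Fnk q (-g) c b n k = hnorm q g b c n := by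
  have hsum := h.summable_Fnk_mul_Fnk_neg n n
  simp only [h.Fnk_mul_Fnk_neg_self] at hsum ⊢
  rw [summable_mul_left_iff (neg_ne_zero.2 h.pairingConst_ne_zero)] at hsum
  have key := nodeWeightConst_mul_tsum_nodeWeight_div h.q_ne_zero h.norm_q_lt_one h.sq_g_ne_zero
    h.b_ne_zero h.c_ne_zero h.notQPower_sq_g h.notQPower_b h.notQPower_c h.notQPower_div_b
    h.notQPower_div_c h2n hsum
  have hconst := nodeWeightConst_ne_zero h.norm_q_lt_one h.sq_g_ne_zero h.c_ne_zero
    h.notQPower_sq_g h.notQPower_c h.notQPower_div_c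
  have hcoef : -pairingConst g b c *
      (b * (q : ℂ) ^ n / g ^ 2 * (1 - b * c / g ^ 2) /
        ((1 - b * c / g ^ 2 * (q : ℂ) ^ (2 * n)) * (1 - b / g ^ 2) * (1 - b))) /
      ((1 - c) * (1 - g ^ 2 / c) / (1 - g ^ 2)) =
      (1 - b * c / g ^ 2) / (1 - b * c / g ^ 2 * (q : ℂ) ^ (2 * n)) * (q : ℂ) ^ n := by
    have hu : (1 - c) * (1 - g ^ 2 / c) / (1 - g ^ 2) ≠ 0 :=
      div_ne_zero (mul_ne_zero h.notQPower_c.one_sub_ne_zero h.notQPower_div_c.one_sub_ne_zero)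
        h.notQPower_sq_g.one_sub_ne_zero
    have hba : 1 - b / g ^ 2 ≠ 0 := (inv_div (g ^ 2) b ▸ h.notQPower_div_b.inv).one_sub_ne_zero
    have hb := h.notQPower_b.one_sub_ne_zero
    have hb0 := h.b_ne_zero
    have hg0 := h.g_ne_zero
    rw [h.pairingConst_eq_neg_mul]
    generalize (1 - c) * (1 - g ^ 2 / c) / (1 - g ^ 2) = u at *
    generalize 1 - b / g ^ 2 = v at *
    field_simp
  rw [tsum_mul_left, eq_div_of_mul_eq hconst ((mul_comm _ _).trans key), hnorm_eq_reducedTheta,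
    nodeWeightConst, mul_assoc _ _ ((q : ℂ) ^ n), ← hcoef]
  simp only [div_eq_mul_inv, mul_inv, inv_inv]
  ring

theorem tsum_Fnk_mul_Fnk_neg (h2n : ∀ n : ℤ, b * c / g ^ 2 * (q : ℂ) ^ (2 * n) ≠ 1) (n m : ℤ) :
    ∑' k, Fnk q g b c n k * Fnk q (-g) c b m k = hnorm q g b c n * if n = m then 1 else 0 := by
  rcases lt_trichotomy n m with hnm | rfl | hmn
  · rw [if_neg hnm.ne, mul_zero]
    simpa [mul_comm] using h.symm.tsum_Fnk_mul_Fnk_neg_of_lt hnm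
  · rw [if_pos rfl, mul_one, h.tsum_Fnk_mul_Fnk_neg_self (h2n n)]
  · rw [if_neg hmn.ne', mul_zero, h.tsum_Fnk_mul_Fnk_neg_of_lt hmn]

end IsGeneric

theorem intervalIntegral_tsum_mul {ι : Type*} [Countable ι] {u : ι → ℂ} (hu : Summable u)
    {e : ι → ℝ → ℂ} (he : ∀ k, Continuous (e k)) (he1 : ∀ k θ, ‖e k θ‖ ≤ 1) {G : ℝ → ℂ}
    (hG : Continuous G) (a b : ℝ) :
    ∫ θ in a..b, (∑' k, u k * e k θ) * G θ = ∑' k, u k * ∫ θ in a..b, e k θ * G θ := by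
  have hbound (k : ι) (θ : ℝ) : ‖u k * (e k θ * G θ)‖ ≤ ‖u k‖ * ‖G θ‖ := by
    rw [norm_mul, norm_mul]
    gcongr
    exact mul_le_of_le_one_left (norm_nonneg _) (he1 k θ)
  have hsum (θ : ℝ) : Summable fun k => ‖u k‖ * ‖G θ‖ := hu.norm.mul_right _
  have hint : IntervalIntegrable (fun θ => ∑' k, ‖u k‖ * ‖G θ‖) MeasureTheory.volume a b := by
    simp only [tsum_mul_right]
    exact Continuous.intervalIntegrable (by fun_prop) a b
  have key := intervalIntegral.hasSum_integral_of_dominated_convergence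
    (F := fun k θ => u k * (e k θ * G θ)) (fun k θ => ‖u k‖ * ‖G θ‖)
    (fun k => Continuous.aestronglyMeasurable (by fun_prop))
    (fun k => .of_forall fun θ _ => hbound k θ) (.of_forall fun θ _ => hsum θ) hint
    (.of_forall fun θ _ => ((hsum θ).of_norm_bounded (hbound · θ)).hasSum)
  simp only [← tsum_mul_right, mul_assoc, ← intervalIntegral.integral_const_mul]
  exact key.tsum_eq.symm

theorem norm_exp_ofReal_mul_I_zpow (k : ℤ) (θ : ℝ) : ‖exp (θ * I) ^ k‖ = 1 := by
  rw [norm_zpow, norm_exp_ofReal_mul_I, one_zpow]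

theorem continuous_exp_ofReal_mul_I_zpow (k : ℤ) : Continuous fun θ : ℝ => exp (θ * I) ^ k := by
  simp only [← exp_int_mul]
  fun_prop

theorem integral_exp_zpow_mul_conj_exp_zpow (k l : ℤ) :
    ∫ θ in (0 : ℝ)..2 * Real.pi, exp (θ * I) ^ k * (starRingEnd ℂ) (exp (θ * I) ^ l) =
      if k = l then 2 * (Real.pi : ℂ) else 0 := by
  have hexp (θ : ℝ) : exp (θ * I) ^ k * (starRingEnd ℂ) (exp (θ * I) ^ l) =
      exp (((k - l : ℤ) : ℂ) * I * θ) := by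
    rw [map_zpow₀, ← exp_conj, ← exp_int_mul, ← exp_int_mul, ← exp_add]
    simp
    ring_nf
  simp only [hexp]
  split_ifs with hkl
  · simp [hkl]
  · have hI : ((k - l : ℤ) : ℂ) * I ≠ 0 :=
      mul_ne_zero (Int.cast_ne_zero.2 (sub_ne_zero.2 hkl)) I_ne_zero
    have hperiod : ((k - l : ℤ) : ℂ) * I * (2 * Real.pi : ℝ) =
        (k - l : ℤ) * (2 * Real.pi * I) := by
      push_cast
      ring
    rw [integral_exp_mul_complex hI, hperiod, exp_int_mul_two_pi_mul_I]
    simp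

theorem integral_tsum_mul_conj_tsum {u v : ℤ → ℂ} (hu : Summable u) (hv : Summable v) :
    1 / (2 * (Real.pi : ℂ)) * ∫ θ in (0 : ℝ)..2 * Real.pi,
      (∑' k, u k * exp (θ * I) ^ k) * (starRingEnd ℂ) (∑' k, v k * exp (θ * I) ^ k) =
      ∑' k, u k * (starRingEnd ℂ) (v k) := by
  have hcont := continuous_exp_ofReal_mul_I_zpow
  have hnorm (k : ℤ) (θ : ℝ) := (norm_exp_ofReal_mul_I_zpow k θ).le
  have hvcont : Continuous fun θ : ℝ => ∑' k, v k * exp (θ * I) ^ k :=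
    continuous_tsum (fun k => continuous_const.mul (hcont k)) hv.norm fun k θ => by
      rw [norm_mul, norm_exp_ofReal_mul_I_zpow, mul_one]
  have hcoeff (k : ℤ) : ∫ θ in (0 : ℝ)..2 * Real.pi,
      exp (θ * I) ^ k * (starRingEnd ℂ) (∑' l, v l * exp (θ * I) ^ l) =
      2 * Real.pi * (starRingEnd ℂ) (v k) := by
    have key := congrArg (starRingEnd ℂ) (intervalIntegral_tsum_mul hv hcont hnorm
      (continuous_conj.comp (hcont k)) 0 (2 * Real.pi))
    simp only [Function.comp_apply, integral_exp_zpow_mul_conj_exp_zpow, mul_ite, mul_zero,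
      tsum_ite_eq, ← intervalIntegral.intervalIntegral_conj, map_mul, conj_conj, conj_ofReal,
      map_ofNat] at key
    simpa only [mul_comm] using key
  have key := intervalIntegral_tsum_mul hu hcont hnorm (continuous_conj.comp hvcont) 0 (2 * Real.pi)
  simp only [Function.comp_apply] at key
  rw [key]
  simp only [hcoeff, mul_left_comm _ (2 * (Real.pi : ℂ)), tsum_mul_left]
  rw [one_div, mul_inv_cancel_left₀ (by simp [Real.pi_ne_zero])]

section Conjugation

variable {q : ℝ} {g b c : ℂ}

theorem conj_eq_neg_of_re_eq_zero (hg : g.re = 0) : (starRingEnd ℂ) g = -g :=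
  Complex.ext (by simp [hg]) (by simp)

theorem NotQPower.conj (h : NotQPower q b) : NotQPower q ((starRingEnd ℂ) b) := fun j hj =>
  h j <| by simpa using congrArg (starRingEnd ℂ) hj

theorem notQPower_sq_of_re_eq_zero (hq : 0 < q) (hg : g.re = 0) :
    NotQPower q (g ^ 2) := fun j h => by
  have hre := congrArg re h
  rw [← ofReal_zpow, re_mul_ofReal, sq, mul_re, hg, one_re] at hre
  nlinarith [mul_nonneg (mul_self_nonneg g.im) (zpow_pos hq j).le]

theorem isGeneric_of_qPoch_ne_zero (hq0 : 0 < q) (hq1 : q < 1) (hg0 : g ≠ 0) (hg : g.re = 0)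
    (hb0 : b ≠ 0) (hc : c = (starRingEnd ℂ) b) (hcq : ∀ m : ℤ, qPoch (c * q) q m ≠ 0)
    (hbq : ∀ m : ℤ, qPoch (g ^ 2 * q / b) q m ≠ 0) : IsGeneric q g b c := by
  have hq : (q : ℂ) ≠ 0 := by exact_mod_cast hq0.ne'
  have hshift {z : ℂ} (hz : ∀ m : ℤ, qPoch (z * q) q m ≠ 0) : NotQPower q z := by
    simpa [hq] using (notQPower_of_qPoch_ne_zero hz).mul_zpow hq (-1)
  have hcgen : NotQPower q c := hshift hcq
  have hbgen : NotQPower q (g ^ 2 / b) := hshift (by simpa only [mul_div_right_comm] using hbq)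
  have hconj : (starRingEnd ℂ) c = b := by rw [hc, conj_conj]
  exact
    { q_pos := hq0
      q_lt_one := hq1
      g_ne_zero := hg0
      b_ne_zero := hb0
      c_ne_zero := hc ▸ (map_ne_zero _).2 hb0
      notQPower_sq_g := notQPower_sq_of_re_eq_zero hq0 hg
      notQPower_b := hconj ▸ hcgen.conj
      notQPower_c := hcgen
      notQPower_div_b := hbgen
      notQPower_div_c := by simpa [conj_eq_neg_of_re_eq_zero hg, ← hc] using hbgen.conj }

theorem conj_Fnk (hg : g.re = 0) (hc : c = (starRingEnd ℂ) b) (n k : ℤ) :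
    (starRingEnd ℂ) (Fnk q g b c n k) = Fnk q (-g) c b n k := by
  simp [Fnk, map_zpow₀, conj_qPoch, conj_eq_neg_of_re_eq_zero hg, hc]

end Conjugation

/-- The functions `F_n`, `n ∈ ℤ`, form a family of orthogonal functions on the unit
circle with weight function `w(z) = 1` and squared norms `h_n(g,b,c|q)`. -/
theorem orthogonality_on_unit_circle (q : ℝ) (hq0 : 0 < q) (hq1 : q < 1)
    (g b c : ℂ) (hg : g ≠ 0) (hgre : g.re = 0) (hb : b ≠ 0) (hc : c = (starRingEnd ℂ) b)
    (h1g : 1 - g ≠ 0)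
    (hd1 : ∀ m : ℤ, qPoch (c * (q : ℂ)) (q : ℂ) m ≠ 0)
    (hd2 : ∀ m : ℤ, qPoch (g ^ 2 * (q : ℂ) / b) (q : ℂ) m ≠ 0)
    (hd3 : qPochInf (g ^ 2 * (q : ℂ) / b) (q : ℂ) ≠ 0 ∧
      qPochInf (b * (q : ℂ) / g ^ 2) (q : ℂ) ≠ 0 ∧
      qPochInf (g ^ 2 * (q : ℂ) / c) (q : ℂ) ≠ 0 ∧
      qPochInf (c * (q : ℂ) / g ^ 2) (q : ℂ) ≠ 0 ∧
      qPochInf (b * (q : ℂ)) (q : ℂ) ≠ 0 ∧ qPochInf ((q : ℂ) / b) (q : ℂ) ≠ 0 ∧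
      qPochInf (c * (q : ℂ)) (q : ℂ) ≠ 0 ∧ qPochInf ((q : ℂ) / c) (q : ℂ) ≠ 0)
    (hd4 : ∀ m : ℤ, 1 - b * c * (q : ℂ) ^ (2 * m) / g ^ 2 ≠ 0) :
    ∀ n m : ℤ,
      (1 / (2 * (Real.pi : ℂ))) *
          ∫ θ in (0 : ℝ)..(2 * Real.pi),
            Fq q g b c n (Complex.exp ((θ : ℂ) * Complex.I)) *
              (starRingEnd ℂ) (Fq q g b c m (Complex.exp ((θ : ℂ) * Complex.I))) =
        hnorm q g b c n * (if n = m then 1 else 0) := by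
  intro n m
  have hgen := isGeneric_of_qPoch_ne_zero hq0 hq1 hg hgre hb hc hd1 hd2
  have hbc : ‖b‖ = ‖c‖ := by rw [hc, RCLike.norm_conj]
  have h2n (j : ℤ) : b * c / g ^ 2 * (q : ℂ) ^ (2 * j) ≠ 1 := fun hj =>
    hd4 j (by rw [mul_div_right_comm, hj, sub_self])
  simp only [Fq]
  rw [integral_tsum_mul_conj_tsum (hgen.summable_Fnk hbc n) (hgen.summable_Fnk hbc m)]
  simp only [conj_Fnk hgre hc, hgen.tsum_Fnk_mul_Fnk_neg h2n]
end

section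
/- Let a,c ∈ ℂ∖ℤ with a−c not a nonzero integer. Define, for n,k,l ∈ ℤ, f_{nk} := Γ(1+a−c)/(Γ(1+a+n+k)·Γ(1−c−n−k)) and g_{kl} := Γ(1+c−a)/(Γ(1+c+l+k)·Γ(1−a−l−k)). Then the infinite matrices F=(f_{nk})_{n,k∈ℤ} and G=(g_{kl})_{k,l∈ℤ} are inverses of each other: for all n,l ∈ ℤ, Σ_{k∈ℤ} f_{nk} g_{kl} = δ_{n,l} and Σ_{k∈ℤ} g_{nk} f_{kl} = δ_{n,l}, both bilateral sums converging absolutely. -/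
open Complex

/-- `f_{nk} = Γ(1+a−c)/(Γ(1+a+n+k)·Γ(1−c−n−k))`. -/
noncomputable def fMat (a c : ℂ) (n k : ℤ) : ℂ :=
  Complex.Gamma (1 + a - c) /
    (Complex.Gamma (1 + a + (n : ℂ) + (k : ℂ)) * Complex.Gamma (1 - c - (n : ℂ) - (k : ℂ)))

/-- `g_{kl} = Γ(1+c−a)/(Γ(1+c+l+k)·Γ(1−a−l−k))`. -/
noncomputable def gMat (a c : ℂ) (k l : ℤ) : ℂ :=
  Complex.Gamma (1 + c - a) /
    (Complex.Gamma (1 + c + (l : ℂ) + (k : ℂ)) * Complex.Gamma (1 - a - (l : ℂ) - (k : ℂ)))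

/-!
Up to a Gamma factor the entries of `F` and `G` are binomial coefficients, `a - c choose a + n + k`
and `c - a choose -a - l - k`, so both matrix products are balanced bilateral Vandermonde sums
`∑ₖ (s choose x + k) (-s choose y - k)` with `x + y` an integer. Gosper's algorithm writes
`s (x + y)` times the summand as a difference `T (k + 1) - T k`. The limits of `T` at `±∞` follow
from Euler's limit formula and the reflection formula, and their difference is a product of sines,
which evaluates the sum when `s (x + y) ≠ 0`. If `s = 0` or `x + y = 0`, every summand is a product
of two values of the sinc function, that is, of Fourier coefficients of exponentials
`θ ↦ exp (2 π i z θ)` on `[-1/2, 1/2]`, and Parseval's identity gives the sum.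
-/

open Filter Asymptotics MeasureTheory
open scoped Nat ComplexConjugate Real Topology

/-- The binomial coefficient `s choose x` of complex arguments, divided by `Γ(1 + s)` so as to be
entire in both variables. Since `Complex.Gamma` vanishes at its poles, `(Gamma z)⁻¹` is the entire
function `1 / Γ` everywhere, so no arguments have to be excluded. -/
noncomputable def entireBinom (s x : ℂ) : ℂ :=
  (Gamma (1 + x) * Gamma (1 + s - x))⁻¹

lemma entireBinom_symm (s x : ℂ) : entireBinom s (s - x) = entireBinom s x := by
  rw [entireBinom, entireBinom, mul_comm]
  ring_nf

lemma mul_entireBinom (s x : ℂ) : x * entireBinom s x = entireBinom (s - 1) (x - 1) := by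
  have hx := one_div_Gamma_eq_self_mul_one_div_Gamma_add_one x
  simp only [entireBinom, mul_inv]
  rw [show 1 + (x - 1) = x by ring, hx]
  ring_nf

lemma sub_mul_entireBinom (s x : ℂ) : (s - x) * entireBinom s x = entireBinom (s - 1) x := by
  rw [← entireBinom_symm s, mul_entireBinom, ← entireBinom_symm (s - 1) x]
  ring_nf

lemma entireBinom_mul_entireBinom_neg (s x : ℂ) :
    entireBinom s x * entireBinom (-s) (-x) = entireBinom 0 x * entireBinom 0 (s - x) := by
  simp only [entireBinom, mul_inv]
  ring_nf

lemma entireBinom_zero_neg (x : ℂ) : entireBinom 0 (-x) = entireBinom 0 x := by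
  simpa using entireBinom_symm 0 x

lemma inv_Gamma_mul_inv_Gamma_one_sub (z : ℂ) :
    (Gamma z)⁻¹ * (Gamma (1 - z))⁻¹ = sin (π * z) / π := by
  rw [← mul_inv, Gamma_mul_Gamma_one_sub, inv_div]

lemma pi_mul_entireBinom_zero (x : ℂ) : π * x * entireBinom 0 x = sin (π * x) := by
  have hπ : (π : ℂ) ≠ 0 := ofReal_ne_zero.mpr Real.pi_ne_zero
  calc π * x * entireBinom 0 x = π * ((x * (Gamma (x + 1))⁻¹) * (Gamma (1 - x))⁻¹) := by
        simp only [entireBinom, mul_inv]; ring_nf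
    _ = sin (π * x) := by
        rw [← one_div_Gamma_eq_self_mul_one_div_Gamma_add_one, inv_Gamma_mul_inv_Gamma_one_sub,
          mul_div_cancel₀ _ hπ]

lemma entireBinom_zero_zero : entireBinom 0 0 = 1 := by
  simp [entireBinom]

lemma entireBinom_zero_intCast (m : ℤ) : entireBinom 0 m = if m = 0 then 1 else 0 := by
  split_ifs with hm
  · rw [hm, Int.cast_zero, entireBinom_zero_zero]
  · have hsin := pi_mul_entireBinom_zero m
    rw [mul_comm (π : ℂ), sin_int_mul_pi] at hsin
    simpa [Real.pi_ne_zero, hm] using hsin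

lemma conj_entireBinom_zero (x : ℂ) : conj (entireBinom 0 x) = entireBinom 0 (conj x) := by
  simp [entireBinom, ← Gamma_conj]

lemma integral_exp_two_pi_mul_eq_entireBinom (w : ℂ) :
    ∫ θ : ℝ in (-1 / 2)..(1 / 2), exp (2 * π * I * w * θ) = entireBinom 0 w := by
  rcases eq_or_ne w 0 with rfl | hw
  · norm_num [entireBinom_zero_zero]
  · have hc : 2 * π * I * w ≠ 0 := by simp [hw, Real.pi_ne_zero]
    rw [integral_exp_mul_complex hc, div_eq_iff hc]
    have hsin := pi_mul_entireBinom_zero w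
    rw [Complex.sin] at hsin
    push_cast
    rw [show 2 * π * I * w * (1 / 2) = π * w * I by ring,
      show 2 * π * I * w * (-1 / 2) = -(π * w) * I by ring]
    linear_combination (-2 * I) * hsin - (exp (-(π * w) * I) - exp (π * w * I)) * I_sq

lemma hasSum_conj_fourierCoeffOn_mul {a b : ℝ} {f g : ℝ → ℂ} (hab : a < b)
    (hf : MemLp f 2 (volume.restrict (Set.Ioc a b)))
    (hg : MemLp g 2 (volume.restrict (Set.Ioc a b))) :
    HasSum (fun k : ℤ ↦ conj (fourierCoeffOn hab f k) * fourierCoeffOn hab g k)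
      ((b - a)⁻¹ • ∫ θ in a..b, conj (f θ) * g θ) := by
  have : Fact (0 < b - a) := ⟨sub_pos.mpr hab⟩
  rw [← add_sub_cancel a b] at hf hg
  have hF := hf.memLp_liftIoc.haarAddCircle
  have hG := hg.memLp_liftIoc.haarAddCircle
  convert! fourierBasis.hasSum_inner_mul_inner hF.toLp hG.toLp using 1
  · ext k
    rw [← inner_conj_symm, ← fourierBasis.repr_apply_apply, ← fourierBasis.repr_apply_apply,
      fourierBasis_repr, fourierBasis_repr, fourierCoeff_congr_ae hF.coeFn_toLp,
      fourierCoeff_congr_ae hG.coeFn_toLp, fourierCoeffOn, fourierCoeffOn]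
  · have hbound : b = a + (b - a) := (add_sub_cancel a b).symm
    conv_lhs => rw [hbound, add_sub_cancel_left]
    rw [L2.inner_def, ← AddCircle.integral_liftIoc_eq_intervalIntegral,
      ← AddCircle.integral_haarAddCircle]
    refine integral_congr_ae ?_
    filter_upwards [hF.coeFn_toLp, hG.coeFn_toLp] with θ hFθ hGθ
    rw [hFθ, hGθ, RCLike.inner_apply']
    rfl

lemma fourierCoeffOn_exp (z : ℂ) (k : ℤ) :
    fourierCoeffOn (show (-1 / 2 : ℝ) < 1 / 2 by norm_num) (fun θ ↦ exp (2 * π * I * z * θ)) k =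
      entireBinom 0 (z - k) := by
  rw [fourierCoeffOn_eq_integral, ← integral_exp_two_pi_mul_eq_entireBinom]
  have : (1 / (1 / 2 - -1 / 2) : ℝ) = 1 := by norm_num
  rw [this, one_smul]
  congr 1 with θ
  rw [fourier_coe_apply, smul_eq_mul, ← exp_add]
  congr 1
  push_cast
  ring

lemma memLp_restrict_Ioc_of_continuous {E : Type*} [NormedAddCommGroup E] {f : ℝ → E}
    (hf : Continuous f) (p : ENNReal) (a b : ℝ) :
    MemLp f p (volume.restrict (Set.Ioc a b)) := by
  obtain ⟨C, hC⟩ := isCompact_Icc.exists_bound_of_continuousOn (hf.continuousOn (s := Set.Icc a b))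
  exact MemLp.of_bound hf.aestronglyMeasurable C <|
    ae_restrict_of_forall_mem measurableSet_Ioc fun θ hθ ↦ hC θ (Set.Ioc_subset_Icc_self hθ)

lemma hasSum_entireBinom_zero_mul (x y : ℂ) :
    HasSum (fun k : ℤ ↦ entireBinom 0 (x + k) * entireBinom 0 (y - k)) (entireBinom 0 (x + y)) := by
  have hmem (z : ℂ) : MemLp (fun θ : ℝ ↦ exp (2 * π * I * z * θ)) 2
      (volume.restrict (Set.Ioc (-1 / 2) (1 / 2))) :=
    memLp_restrict_Ioc_of_continuous (by fun_prop) _ _ _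
  have parseval := hasSum_conj_fourierCoeffOn_mul (by norm_num) (hmem (-conj x)) (hmem y)
  convert! parseval using 1
  · ext k
    rw [fourierCoeffOn_exp, fourierCoeffOn_exp, conj_entireBinom_zero, ← entireBinom_zero_neg]
    congr 2
    simp only [map_sub, map_neg, conj_conj, map_intCast, neg_add']
  · rw [← integral_exp_two_pi_mul_eq_entireBinom]
    have : ((1 / 2 - -1 / 2) : ℝ)⁻¹ = 1 := by norm_num
    rw [this, one_smul]
    congr 1 with θ
    rw [← exp_conj, ← exp_add]
    congr 1
    simp only [map_mul, map_neg, conj_ofReal, conj_I, conj_conj, map_ofNat]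
    ring

lemma Gamma_add_natCast {z : ℂ} (hz : ∀ k : ℕ, z ≠ -k) (n : ℕ) :
    Gamma (z + n) = (∏ j ∈ Finset.range n, (z + j)) * Gamma z := by
  induction n with
  | zero => simp
  | succ n ih =>
    have hzn : z + n ≠ 0 := fun h ↦ hz n (eq_neg_of_add_eq_zero_left h)
    rw [Nat.cast_succ, ← add_assoc, Gamma_add_one _ hzn, ih, Finset.prod_range_succ]
    ring

lemma tendsto_cpow_mul_factorial_div_Gamma (z : ℂ) :
    Tendsto (fun n : ℕ ↦ (n : ℂ) ^ z * n ! / Gamma (z + n + 1)) atTop (𝓝 1) := by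
  -- Euler's limit formula covers `0 < re z`; `Γ(w + 1) = w Γ(w)` then extends the limit leftwards.
  obtain ⟨m, hm⟩ := exists_nat_gt (-z.re)
  induction m generalizing z with
  | zero =>
    have hre : 0 < z.re := by simpa using hm
    have hz (k : ℕ) : z ≠ -k := by
      rintro rfl
      rw [neg_re, natCast_re, neg_pos] at hre
      exact hre.not_ge k.cast_nonneg
    have hΓ : Gamma z ≠ 0 := Gamma_ne_zero hz
    have hseq := (GammaSeq_tendsto_Gamma z).div_const (Gamma z)
    rw [div_self hΓ] at hseq
    refine hseq.congr fun n ↦ ?_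
    rw [add_assoc, ← Nat.cast_succ, Gamma_add_natCast hz, ← div_div, GammaSeq]
  | succ m ih =>
    have hshift : -(z + 1).re < m := by
      rw [Nat.cast_succ] at hm
      rw [add_re, one_re]
      linarith
    have hratio : Tendsto (fun n : ℕ ↦ 1 + (z + 1) / n) atTop (𝓝 1) := by
      simpa using (tendsto_const_div_atTop_nhds_zero_nat (z + 1)).const_add 1
    have hnext := (ih (z + 1) hshift).mul hratio
    rw [one_mul] at hnext
    refine hnext.congr' ?_
    filter_upwards [eventually_ne_atTop 0] with n hn
    have hn' : (n : ℂ) ≠ 0 := Nat.cast_ne_zero.mpr hn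
    have hrec := one_div_Gamma_eq_self_mul_one_div_Gamma_add_one (z + n + 1)
    rw [div_eq_mul_inv _ (Gamma (z + n + 1)), hrec, cpow_add _ _ hn', cpow_one,
      show z + 1 + n + 1 = z + n + 1 + 1 by ring]
    field_simp
    ring

lemma sin_pi_mul_add_natCast (z : ℂ) (k : ℕ) :
    sin (π * (z + k)) = (-1) ^ k * sin (π * z) := by
  rw [mul_add, mul_comm _ (k : ℂ), sin_antiperiodic.add_nat_mul_eq]

lemma inv_Gamma_one_sub_add_natCast {z : ℂ} {k : ℕ} (hz : Gamma (z + k) ≠ 0) :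
    (Gamma (1 - (z + k)))⁻¹ = (-1) ^ k * sin (π * z) / π * Gamma (z + k) := by
  rw [← sin_pi_mul_add_natCast, ← inv_Gamma_mul_inv_Gamma_one_sub]
  field_simp

lemma tendsto_entireBinom_add_natCast (s x : ℂ) :
    Tendsto (fun k : ℕ ↦ (-1) ^ k * (k : ℂ) ^ (s + 1) * entireBinom s (x + k)) atTop
      (𝓝 (sin (π * (x - s)) / π)) := by
  have hratio := (tendsto_cpow_mul_factorial_div_Gamma x).div
    (tendsto_cpow_mul_factorial_div_Gamma (x - s - 1)) one_ne_zero
  have hquot := hratio.const_mul (sin (π * (x - s)) / π)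
  rw [div_one, mul_one] at hquot
  refine hquot.congr' ?_
  obtain ⟨N, hN⟩ := exists_nat_gt (s - x).re
  filter_upwards [eventually_ge_atTop N, eventually_ne_atTop 0] with k hkN hk
  have hk' : (k : ℂ) ≠ 0 := Nat.cast_ne_zero.mpr hk
  have hΓ : Gamma (x - s + k) ≠ 0 := by
    refine Gamma_ne_zero_of_re_pos ?_
    have : (N : ℝ) ≤ k := by exact_mod_cast hkN
    rw [sub_re] at hN
    rw [add_re, sub_re, natCast_re]
    linarith
  have hsign : ((-1 : ℂ) ^ k) ^ 2 = 1 := by rw [← pow_mul, mul_comm, pow_mul, neg_one_sq, one_pow]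
  have hcpow : (k : ℂ) ^ x = (k : ℂ) ^ (s + 1) * (k : ℂ) ^ (x - s - 1) := by
    rw [← cpow_add _ _ hk']
    ring_nf
  have hfact : (k ! : ℂ) ≠ 0 := by exact_mod_cast k.factorial_ne_zero
  have hpow : (k : ℂ) ^ (x - s - 1) ≠ 0 := by simp [cpow_eq_zero_iff, hk']
  have hrefl : 1 + s - (x + k) = 1 - (x - s + k) := by ring
  have hden : Gamma (x - s - 1 + k + 1) = Gamma (x - s + k) := by ring_nf
  have hnum : Gamma (x + k + 1) = Gamma (1 + (x + k)) := by ring_nf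
  simp only [Pi.div_apply]
  rw [entireBinom, mul_inv, hrefl, inv_Gamma_one_sub_add_natCast hΓ, hcpow, hden, hnum]
  field_simp
  rw [hsign, mul_one]

lemma hasSum_int_of_tendsto_of_succ_sub {E : Type*} [AddCommGroup E] [TopologicalSpace E]
    [IsTopologicalAddGroup E] [T2Space E] {t T : ℤ → E} {top bot : E} (hsum : Summable t)
    (ht : ∀ k, t k = T (k + 1) - T k) (htop : Tendsto T atTop (𝓝 top))
    (hbot : Tendsto T atBot (𝓝 bot)) : HasSum t (top - bot) := by
  have hpartial (N : ℕ) : ∑ k ∈ Finset.Ico (-(N : ℤ)) N, t k = T N - T (-N) := by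
    rw [← neg_sub, ← Finset.sum_Ico_int_sub, ← Finset.sum_neg_distrib]
    simp only [ht, neg_sub]
  have hboundary : Tendsto (fun N : ℕ ↦ T N - T (-N)) atTop (𝓝 (top - bot)) :=
    (htop.comp tendsto_natCast_atTop_atTop).sub
      (hbot.comp (tendsto_neg_atTop_atBot.comp tendsto_natCast_atTop_atTop))
  have hIco : Tendsto (fun N : ℕ ↦ ∑ k ∈ Finset.Ico (-(N : ℤ)) N, t k) atTop (𝓝 (∑' k, t k)) :=
    hsum.hasSum.comp (Finset.tendsto_Ico_neg (R := ℤ))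
  simp only [hpartial] at hIco
  exact tendsto_nhds_unique hIco hboundary ▸ hsum.hasSum

/-- Gosper's antidifference of the terms `entireBinom s (x + k) * entireBinom (-s) (y - k)` of the
balanced bilateral Vandermonde sum, scaled by `s * (x + y)` so that it has no poles. -/
noncomputable def vandermondeAntidiff (s x y : ℂ) (k : ℤ) : ℂ :=
  entireBinom (s - 1) (x + k - 1) * entireBinom (-s - 1) (y - k)

lemma vandermondeAntidiff_eq (s x y : ℂ) (k : ℤ) :
    vandermondeAntidiff s x y k =
      (x + k) * (-s - y + k) * (entireBinom s (x + k) * entireBinom (-s) (y - k)) := by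
  rw [vandermondeAntidiff, ← mul_entireBinom, ← sub_mul_entireBinom]
  ring

lemma vandermondeAntidiff_succ (s x y : ℂ) (k : ℤ) :
    vandermondeAntidiff s x y (k + 1) =
      (s - x - k) * (y - k) * (entireBinom s (x + k) * entireBinom (-s) (y - k)) := by
  have hs := sub_mul_entireBinom s (x + k)
  have hy := mul_entireBinom (-s) (y - k)
  rw [vandermondeAntidiff, Int.cast_add, Int.cast_one, show x + (k + 1) - 1 = x + k by ring,
    ← sub_sub y, ← hs, ← hy]
  ring

lemma vandermondeAntidiff_succ_sub (s x y : ℂ) (k : ℤ) :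
    vandermondeAntidiff s x y (k + 1) - vandermondeAntidiff s x y k =
      s * (x + y) * (entireBinom s (x + k) * entireBinom (-s) (y - k)) := by
  rw [vandermondeAntidiff_succ, vandermondeAntidiff_eq]
  ring

lemma vandermondeAntidiff_neg (s x y : ℂ) (k : ℤ) :
    vandermondeAntidiff s x y (-k) = vandermondeAntidiff (-s) y x (k + 1) := by
  rw [vandermondeAntidiff, vandermondeAntidiff, mul_comm]
  push_cast
  ring_nf

lemma tendsto_vandermondeAntidiff_atTop (s x y : ℂ) :
    Tendsto (vandermondeAntidiff s x y) atTop (𝓝 (-(sin (π * (x - s)) * sin (π * y)) / π ^ 2)) := by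
  rw [← Nat.map_cast_int_atTop, tendsto_map'_iff]
  have hprod := (tendsto_entireBinom_add_natCast (s - 1) (x - 1)).mul
    (tendsto_entireBinom_add_natCast (-s - 1) (-s - 1 - y))
  convert hprod.congr' ?_ using 2
  · rw [show x - 1 - (s - 1) = x - s by ring, show π * (-s - 1 - y - (-s - 1)) = -(π * y) by ring,
      sin_neg]
    ring
  filter_upwards [eventually_ne_atTop 0] with k hk
  have hk' : (k : ℂ) ≠ 0 := Nat.cast_ne_zero.mpr hk
  have hcpow : (k : ℂ) ^ (s - 1 + 1) * (k : ℂ) ^ (-s - 1 + 1) = 1 := by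
    rw [← cpow_add _ _ hk', show s - 1 + 1 + (-s - 1 + 1) = 0 by ring, cpow_zero]
  have hsign : (-1 : ℂ) ^ k * (-1) ^ k = 1 := by rw [← mul_pow]; norm_num
  have hsymm : entireBinom (-s - 1) (-s - 1 - y + k) = entireBinom (-s - 1) (y - k) := by
    rw [← entireBinom_symm]
    ring_nf
  rw [Function.comp_apply, vandermondeAntidiff, Int.cast_natCast, hsymm,
    show x - 1 + k = x + k - 1 by ring]
  linear_combination entireBinom (s - 1) (x + k - 1) * entireBinom (-s - 1) (y - k) *
    ((k : ℂ) ^ (s - 1 + 1) * (k : ℂ) ^ (-s - 1 + 1) * hsign + hcpow)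

lemma tendsto_vandermondeAntidiff_atBot (s x y : ℂ) :
    Tendsto (vandermondeAntidiff s x y) atBot (𝓝 (-(sin (π * (y + s)) * sin (π * x)) / π ^ 2)) := by
  have hneg := (tendsto_vandermondeAntidiff_atTop (-s) y x).comp
    (tendsto_atTop_add_const_right _ 1 tendsto_neg_atBot_atTop)
  rw [sub_neg_eq_add] at hneg
  refine hneg.congr fun k ↦ ?_
  rw [Function.comp_apply, ← vandermondeAntidiff_neg, neg_neg]

lemma summable_entireBinom_mul_entireBinom_neg (s x y : ℂ) :
    Summable fun k : ℤ ↦ entireBinom s (x + k) * entireBinom (-s) (y - k) := by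
  have hbounded : vandermondeAntidiff s x y =O[cofinite] fun _ ↦ (1 : ℝ) := by
    rw [Int.cofinite_eq]
    exact ((tendsto_vandermondeAntidiff_atBot s x y).isBigO_one ℝ).sup
      ((tendsto_vandermondeAntidiff_atTop s x y).isBigO_one ℝ)
  have hinv (z : ℂ) : (fun k : ℤ ↦ (z + k)⁻¹) =O[cofinite] fun k ↦ (k : ℝ)⁻¹ := by
    simpa using EisensteinSeries.linear_inv_isBigO_right 1 z
  have hne (z : ℂ) : ∀ᶠ k : ℤ in cofinite, z + k ≠ 0 := by
    refine Set.Subsingleton.finite fun j hj k hk ↦ ?_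
    simpa using (not_not.mp hj).trans (not_not.mp hk).symm
  refine summable_of_isBigO (Real.summable_one_div_int_pow.mpr one_lt_two) ?_
  refine (hbounded.mul ((hinv x).mul (hinv (-s - y)))).congr' ?_ (.of_forall fun k ↦ by ring)
  filter_upwards [hne x, hne (-s - y)] with k hx hy
  rw [vandermondeAntidiff_eq]
  field_simp

theorem hasSum_entireBinom_mul_entireBinom_neg (s x y : ℂ) :
    HasSum (fun k : ℤ ↦ entireBinom s (x + k) * entireBinom (-s) (y - k))
      (entireBinom 0 s * entireBinom 0 (x + y)) := by
  rcases eq_or_ne s 0 with rfl | hs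
  · simpa only [neg_zero, entireBinom_zero_zero, one_mul] using hasSum_entireBinom_zero_mul x y
  rcases eq_or_ne (x + y) 0 with hxy | hxy
  · obtain rfl : y = -x := (neg_eq_of_add_eq_zero_right hxy).symm
    rw [hxy, entireBinom_zero_zero, mul_one]
    convert! hasSum_entireBinom_zero_mul x (s - x) using 1
    · ext k
      rw [← neg_add', entireBinom_mul_entireBinom_neg, sub_add_eq_sub_sub]
    · rw [add_sub_cancel]
  have hπ : (π : ℂ) ≠ 0 := ofReal_ne_zero.mpr Real.pi_ne_zero
  have hfactor : s * (x + y) ≠ 0 := mul_ne_zero hs hxy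
  have htelescope := hasSum_int_of_tendsto_of_succ_sub
    ((summable_entireBinom_mul_entireBinom_neg s x y).mul_left (s * (x + y)))
    (fun k ↦ (vandermondeAntidiff_succ_sub s x y k).symm)
    (tendsto_vandermondeAntidiff_atTop s x y) (tendsto_vandermondeAntidiff_atBot s x y)
  rw [← hasSum_mul_left_iff hfactor]
  convert! htelescope using 1
  have hsin : sin (π * s) * sin (π * (x + y)) =
      sin (π * (y + s)) * sin (π * x) - sin (π * (x - s)) * sin (π * y) := by
    simp only [mul_add, mul_sub, sin_add, sin_sub]
    ring
  rw [← pi_mul_entireBinom_zero, ← pi_mul_entireBinom_zero (x + y)] at hsin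
  rw [← sub_div, eq_div_iff (pow_ne_zero 2 hπ)]
  linear_combination hsin

lemma fMat_eq_entireBinom (a c : ℂ) (n k : ℤ) :
    fMat a c n k = Gamma (1 + (a - c)) * entireBinom (a - c) (a + n + k) := by
  rw [fMat, entireBinom, div_eq_mul_inv]
  ring_nf

lemma gMat_eq_entireBinom (a c : ℂ) (k l : ℤ) :
    gMat a c k l = Gamma (1 - (a - c)) * entireBinom (-(a - c)) (-a - l - k) := by
  rw [gMat, entireBinom, div_eq_mul_inv, mul_comm (Gamma (1 + c + l + k))]
  ring_nf

lemma gMat_mul_fMat (a c : ℂ) (n k l : ℤ) :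
    gMat a c n k * fMat a c k l = fMat c a n k * gMat c a k l := by
  simp only [fMat, gMat]
  ring_nf

lemma Gamma_mul_Gamma_mul_entireBinom_zero {s : ℂ} (hs : ∀ m : ℤ, m ≠ 0 → s ≠ m) :
    Gamma (1 + s) * Gamma (1 - s) * entireBinom 0 s = 1 := by
  have hpos : Gamma (1 + s) ≠ 0 := Gamma_ne_zero fun m hm ↦ by
    refine hs (-(m + 1)) (by lia) ?_
    push_cast
    linear_combination hm
  have hneg : Gamma (1 - s) ≠ 0 := Gamma_ne_zero fun m hm ↦ by
    refine hs (m + 1) (by lia) ?_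
    push_cast
    linear_combination -hm
  rw [entireBinom, add_zero, mul_inv_cancel₀ (mul_ne_zero hpos hneg)]

lemma hasSum_fMat_mul_gMat {a c : ℂ} (hac : ∀ m : ℤ, m ≠ 0 → a - c ≠ m) (n l : ℤ) :
    HasSum (fun k ↦ fMat a c n k * gMat a c k l) (if n = l then 1 else 0) := by
  convert! (hasSum_entireBinom_mul_entireBinom_neg (a - c) (a + n) (-a - l)).mul_left
    (Gamma (1 + (a - c)) * Gamma (1 - (a - c))) using 1
  · ext k
    rw [fMat_eq_entireBinom, gMat_eq_entireBinom, mul_mul_mul_comm]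
  · rw [← mul_assoc, Gamma_mul_Gamma_mul_entireBinom_zero hac, one_mul,
      show a + n + (-a - l) = (n - l : ℤ) by push_cast; ring, entireBinom_zero_intCast]
    simp only [sub_eq_zero]

theorem bilateral_matrix_inverse_general (a c : ℂ) (hac : ∀ m : ℤ, m ≠ 0 → a - c ≠ (m : ℂ)) :
    ∀ n l : ℤ,
      (Summable fun k : ℤ => ‖fMat a c n k * gMat a c k l‖) ∧
      (∑' k : ℤ, fMat a c n k * gMat a c k l) = (if n = l then 1 else 0) ∧
      (Summable fun k : ℤ => ‖gMat a c n k * fMat a c k l‖) ∧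
      (∑' k : ℤ, gMat a c n k * fMat a c k l) = (if n = l then 1 else 0) := by
  intro n l
  have hca (m : ℤ) (hm : m ≠ 0) : c - a ≠ m := by
    rw [← neg_sub, ne_eq, neg_eq_iff_eq_neg, ← Int.cast_neg]
    exact hac (-m) (neg_ne_zero.mpr hm)
  have hFG := hasSum_fMat_mul_gMat hac n l
  have hGF := hasSum_fMat_mul_gMat hca n l
  simp only [← gMat_mul_fMat] at hGF
  exact ⟨hFG.summable.norm, hFG.tsum_eq, hGF.summable.norm, hGF.tsum_eq⟩

/-- A bilateral matrix inverse extracted from Dougall's `₂H₂` summation: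
the infinite matrices `F = (f_{nk})_{n,k ∈ ℤ}` and `G = (g_{kl})_{k,l ∈ ℤ}` are
inverses of each other, both bilateral sums converging absolutely. -/
theorem bilateral_matrix_inverse (a c : ℂ)
    (ha : ∀ m : ℤ, a ≠ (m : ℂ)) (hc : ∀ m : ℤ, c ≠ (m : ℂ))
    (hac : ∀ m : ℤ, m ≠ 0 → a - c ≠ (m : ℂ)) :
    ∀ n l : ℤ,
      (Summable fun k : ℤ => ‖fMat a c n k * gMat a c k l‖) ∧
      (∑' k : ℤ, fMat a c n k * gMat a c k l) = (if n = l then 1 else 0) ∧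
      (Summable fun k : ℤ => ‖gMat a c n k * fMat a c k l‖) ∧
      (∑' k : ℤ, gMat a c n k * fMat a c k l) = (if n = l then 1 else 0) :=
  bilateral_matrix_inverse_general a c hac
end

section
/- Let a,b,c ∈ ℂ, let k be an arbitrary integer and M a non-negative integer, and assume the parameters are generic (no gamma function on the right-hand side is evaluated at a nonpositive integer, and no shifted factorial appearing in a denominator vanishes). Then the bilateral sum ₃H₃[a, c+k, 1+c−b+M ; 1+a+k, 1+c+M, 1+c−b ; 1] = Σ_{j=−∞}^{∞} ((a)_j (c+k)_j (1+c−b+M)_j)/((1+a+k)_j (1+c+M)_j (1+c−b)_j) converges absolutely and equals [Γ(1+a)Γ(1−a)Γ(1+c)Γ(1−c)/(Γ(1+a−c)Γ(1+c−a))] · [((−M)_k (1+a)_k (b)_k)/((1)_k (c)_k (a+b−c−M)_k)] · [((1+c)_M (1+c−a−b)_M)/((1+c−a)_M (1+c−b)_M)]. -/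
open Complex

/-- The shifted factorial `(a)_k = Γ(a+k)/Γ(a)` for integer `k`, given by the
(generically equal) product formulas. -/
noncomputable def poch (a : ℂ) (k : ℤ) : ℂ :=
  if 0 ≤ k then ∏ j ∈ Finset.range k.toNat, (a + (j : ℂ))
  else (∏ j ∈ Finset.range (-k).toNat, (a - 1 - (j : ℂ)))⁻¹

/-!
After cancellation the summand is a constant multiple of
`(e + j)_M / ((a + j)_{k+1} (c + k + j)_{M+1-k})` with `e = 1 + c - b`. If `k < 0` or `k > M`, this
is a rational function of `j` of degree `-2` whose poles lie in a single arithmetic block, and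
such a function sums to `0`: dividing its numerator by the linear factors of its denominator
reduces it to telescoping sums. If `0 ≤ k ≤ M`, a contiguous relation lowers `M` together with one
of the two denominator blocks, and Pascal's rule identifies the solution of the resulting
recursion as a multiple of `∑ 1 / ((a + j) (c + j))`. The cotangent expansion and the reflection
formula for `Γ` evaluate this last sum when `a ≠ c`; the case `a = c` follows by continuity.
-/

open Polynomial Filter Topology Finset

local notation "ℂ_ℤ" => integerComplement

section IntegerComplement

variable {x : ℂ}

lemma add_natCast_mem_integerComplement (hx : x ∈ ℂ_ℤ) (n : ℕ) : x + n ∈ ℂ_ℤ := by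
  exact_mod_cast (add_intCast_mem_integerComplement (n : ℤ)).mpr hx

lemma sub_natCast_mem_integerComplement (hx : x ∈ ℂ_ℤ) (n : ℕ) : x - n ∈ ℂ_ℤ := by
  simpa [sub_eq_add_neg] using (add_intCast_mem_integerComplement (-n : ℤ)).mpr hx

lemma ne_neg_natCast_of_mem_integerComplement (hx : x ∈ ℂ_ℤ) (n : ℕ) : x ≠ -n := fun h =>
  hx ⟨-n, by simp [h]⟩

end IntegerComplement

section Poch

variable {y : ℂ}

lemma poch_natCast (y : ℂ) (n : ℕ) : poch y n = (ascPochhammer ℂ n).eval y := by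
  rw [poch, if_pos (Int.natCast_nonneg n), Int.toNat_natCast]
  induction n with
  | zero => simp
  | succ n ih => rw [prod_range_succ, ih, ascPochhammer_succ_eval]

@[simp]
lemma poch_zero (y : ℂ) : poch y 0 = 1 := by simp [poch]

lemma poch_natCast_succ (y : ℂ) (n : ℕ) : poch y (n + 1 : ℕ) = poch y n * (y + n) := by
  simp only [poch_natCast, ascPochhammer_succ_eval]

lemma poch_natCast_add (y : ℂ) (m n : ℕ) :
    poch y (m + n : ℕ) = poch y m * poch (y + m) n := by
  simp only [poch_natCast, ← ascPochhammer_mul, eval_mul, eval_comp, eval_add, eval_X,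
    eval_natCast]

@[simp]
lemma poch_one (y : ℂ) : poch y 1 = y := by simp [poch]

lemma poch_natCast_succ_left (y : ℂ) (n : ℕ) : poch y (n + 1 : ℕ) = y * poch (y + 1) n := by
  simpa [add_comm n 1] using poch_natCast_add y 1 n

lemma poch_natCast_eq_neg_one_pow_mul (y : ℂ) (n : ℕ) :
    poch y n = (-1) ^ n * poch (1 - y - n) n := by
  rw [poch_natCast, poch_natCast, ← neg_neg y, ascPochhammer_eval_neg_eq_descPochhammer,
    descPochhammer_eval_eq_ascPochhammer]
  ring_nf

lemma poch_neg_natCast_eq_choose (n k : ℕ) :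
    poch (-(n : ℂ)) k = (-1) ^ k * (n.choose k * poch 1 k) := by
  rw [poch_natCast, poch_natCast, ascPochhammer_eval_neg_eq_descPochhammer,
    descPochhammer_eval_eq_descFactorial, ascPochhammer_eval_one,
    Nat.descFactorial_eq_factorial_mul_choose]
  push_cast
  ring

lemma poch_neg_natCast (y : ℂ) (n : ℕ) : poch y (-n) = (poch (y - n) n)⁻¹ := by
  have hprod : ∏ j ∈ range n, (y - 1 - j) = poch (y - n) n := by
    simp only [poch, Int.natCast_nonneg, if_true, Int.toNat_natCast]
    rw [← prod_range_reflect]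
    refine prod_congr rfl fun i hi => ?_
    rw [Nat.sub_sub, Nat.cast_sub (by grind)]
    push_cast
    ring
  rcases n.eq_zero_or_pos with rfl | hn
  · simp
  · rw [poch, if_neg (by lia), neg_neg, Int.toNat_natCast, hprod]

lemma mem_integerComplement_of_poch_ne_zero (h : ∀ j : ℤ, poch y j ≠ 0) : y ∈ ℂ_ℤ := by
  rintro ⟨n, rfl⟩
  obtain ⟨m, rfl | rfl⟩ := n.eq_nat_or_neg
  · rcases m with _ | m
    · exact h 1 (by simp)
    · refine h (-(m + 1 : ℕ)) ?_
      rw [poch_neg_natCast, poch_natCast_succ_left]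
      simp
  · refine h (m + 1 : ℕ) ?_
    rw [poch_natCast_succ]
    simp

lemma poch_eq_Gamma_div (hy : y ∈ ℂ_ℤ) (k : ℤ) : poch y k = Gamma (y + k) / Gamma y := by
  obtain ⟨n, rfl | rfl⟩ := k.eq_nat_or_neg
  · rw [poch_natCast, ← Gamma_add_nat_div_Gamma_eq y (ne_neg_natCast_of_mem_integerComplement hy),
      Int.cast_natCast]
  · have hyn := sub_natCast_mem_integerComplement hy n
    rw [poch_neg_natCast, poch_natCast,
      ← Gamma_add_nat_div_Gamma_eq _ (ne_neg_natCast_of_mem_integerComplement hyn), inv_div]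
    push_cast
    ring_nf

lemma poch_ne_zero (hy : y ∈ ℂ_ℤ) (k : ℤ) : poch y k ≠ 0 := by
  have hyk := (add_intCast_mem_integerComplement k).mpr hy
  rw [poch_eq_Gamma_div hy]
  exact div_ne_zero (Gamma_ne_zero (ne_neg_natCast_of_mem_integerComplement hyk))
    (Gamma_ne_zero (ne_neg_natCast_of_mem_integerComplement hy))

lemma poch_add (hy : y ∈ ℂ_ℤ) (k l : ℤ) : poch y (k + l) = poch y k * poch (y + k) l := by
  have hyk := (add_intCast_mem_integerComplement k).mpr hy
  rw [poch_eq_Gamma_div hy, poch_eq_Gamma_div hy, poch_eq_Gamma_div hyk, mul_comm,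
    div_mul_div_cancel₀ (Gamma_ne_zero (ne_neg_natCast_of_mem_integerComplement hyk)),
    Int.cast_add, add_assoc]

lemma poch_div_poch_add (hy : y ∈ ℂ_ℤ) (j l : ℤ) :
    poch y j / poch (y + l) j = poch y l / poch (y + j) l := by
  have hj := (add_intCast_mem_integerComplement j).mpr hy
  have hl := (add_intCast_mem_integerComplement l).mpr hy
  rw [div_eq_div_iff (poch_ne_zero hl j) (poch_ne_zero hj l), ← poch_add hy, ← poch_add hy,
    add_comm]

end Poch

section Dougall

variable {a c : ℂ}

lemma summable_inv_mul (a c : ℂ) : Summable fun j : ℤ => ((a + j) * (c + j))⁻¹ := by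
  refine EisensteinSeries.summable_inv_of_isBigO_rpow_inv one_lt_two ?_
  simpa [sq, mul_comm] using (EisensteinSeries.linear_inv_isBigO_right 1 a).mul
    (EisensteinSeries.linear_inv_isBigO_right 1 c)

lemma inv_mul_add_inv_mul_eq_cotTerm_sub (ha : a ∈ ℂ_ℤ) (hc : c ∈ ℂ_ℤ) (hac : a ≠ c) (n : ℕ) :
    ((a + (n + 1)) * (c + (n + 1)))⁻¹ + ((a - (n + 1)) * (c - (n + 1)))⁻¹ =
      (cotTerm a n - cotTerm c n) / (c - a) := by
  have ha_add : a + (n + 1) ≠ 0 := by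
    exact_mod_cast integerComplement.ne_zero (add_natCast_mem_integerComplement ha (n + 1))
  have hc_add : c + (n + 1) ≠ 0 := by
    exact_mod_cast integerComplement.ne_zero (add_natCast_mem_integerComplement hc (n + 1))
  have ha_sub : a - (n + 1) ≠ 0 := by
    exact_mod_cast integerComplement.ne_zero (sub_natCast_mem_integerComplement ha (n + 1))
  have hc_sub : c - (n + 1) ≠ 0 := by
    exact_mod_cast integerComplement.ne_zero (sub_natCast_mem_integerComplement hc (n + 1))
  simp only [cotTerm]
  field_simp
  ring

lemma hasSum_inv_mul_of_ne (ha : a ∈ ℂ_ℤ) (hc : c ∈ ℂ_ℤ) (hac : a ≠ c) :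
    HasSum (fun j : ℤ => ((a + j) * (c + j))⁻¹)
      ((Real.pi * cot (Real.pi * a) - Real.pi * cot (Real.pi * c)) / (c - a)) := by
  obtain ⟨s, hs⟩ := summable_inv_mul a c
  have hpaired : HasSum (fun n : ℕ => (cotTerm a n - cotTerm c n) / (c - a))
      (s + (a * c)⁻¹ - 2 * (a * c)⁻¹) := by
    have htail := (hasSum_nat_add_iff' 1).mpr hs.nat_add_neg
    simp only [← inv_mul_add_inv_mul_eq_cotTerm_sub ha hc hac]
    simpa [sub_eq_add_neg, two_mul, add_comm] using htail
  have hcot : HasSum (fun n : ℕ => (cotTerm a n - cotTerm c n) / (c - a))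
      (((Real.pi * cot (Real.pi * a) - 1 / a) - (Real.pi * cot (Real.pi * c) - 1 / c)) /
        (c - a)) := by
    rw [cot_series_rep' ha, cot_series_rep' hc]
    exact ((summable_cotTerm ha).hasSum.sub (summable_cotTerm hc).hasSum).div_const _
  convert hs using 1
  have ha0 := integerComplement.ne_zero ha
  have hc0 := integerComplement.ne_zero hc
  have hpole : (1 / a - 1 / c) / (c - a) = (a * c)⁻¹ := by field_simp
  linear_combination hpole - hpaired.unique hcot

lemma hasSum_inv_mul_add_one (ha : a ∈ ℂ_ℤ) :
    HasSum (fun j : ℤ => ((a + j) * (a + 1 + j))⁻¹) 0 := by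
  have ha1 : a + 1 ∈ ℂ_ℤ := by exact_mod_cast add_natCast_mem_integerComplement ha 1
  convert hasSum_inv_mul_of_ne ha ha1 (by simp) using 1
  simp [cot, mul_add, Complex.sin_add_pi, Complex.cos_add_pi]

lemma Gamma_one_add_mul_Gamma_one_sub {x : ℂ} (hx : x ≠ 0) :
    Gamma (1 + x) * Gamma (1 - x) = Real.pi * x / sin (Real.pi * x) := by
  rw [add_comm, Gamma_add_one x hx, mul_assoc, Gamma_mul_Gamma_one_sub]
  ring

/-- The value `Γ(1+a)Γ(1-a)Γ(1+c)Γ(1-c) / (Γ(1+a-c)Γ(1+c-a))` of the series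
`₂H₂[a, c; 1+a, 1+c; 1]`, a special case of Dougall's bilateral sum. -/
noncomputable def dougallValue (a c : ℂ) : ℂ :=
  Gamma (1 + a) * Gamma (1 - a) * Gamma (1 + c) * Gamma (1 - c) /
    (Gamma (1 + a - c) * Gamma (1 + c - a))

lemma dougallValue_div_eq_cot_sub (ha : a ∈ ℂ_ℤ) (hc : c ∈ ℂ_ℤ) (hac : a ≠ c) :
    dougallValue a c / (a * c) =
      (Real.pi * cot (Real.pi * a) - Real.pi * cot (Real.pi * c)) / (c - a) := by
  have ha0 := integerComplement.ne_zero ha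
  have hc0 := integerComplement.ne_zero hc
  have hac' : a - c ≠ 0 := sub_ne_zero.mpr hac
  have hsin_a := sin_pi_mul_ne_zero ha
  have hsin_c := sin_pi_mul_ne_zero hc
  rw [dougallValue, mul_assoc, Gamma_one_add_mul_Gamma_one_sub ha0,
    Gamma_one_add_mul_Gamma_one_sub hc0, show 1 + a - c = 1 + (a - c) by ring,
    show 1 + c - a = 1 - (a - c) by ring, Gamma_one_add_mul_Gamma_one_sub hac', mul_sub,
    Complex.sin_sub, cot, cot]
  field_simp
  ring

lemma continuousAt_dougallValue_self (ha : a ∈ ℂ_ℤ) :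
    ContinuousAt (fun z => dougallValue a z) a := by
  have hadd : ∀ m : ℕ, 1 + a ≠ -m := ne_neg_natCast_of_mem_integerComplement <| by
    simpa [add_comm] using add_natCast_mem_integerComplement ha 1
  have hsub : ∀ m : ℕ, 1 - a ≠ -m := fun m h => ha ⟨m + 1, by
    push_cast
    linear_combination h⟩
  have hGadd : ContinuousAt (fun z => Gamma (1 + z)) a :=
    ContinuousAt.comp' (f := (1 + ·)) (continuousAt_Gamma _ hadd) (by fun_prop)
  have hGsub : ContinuousAt (fun z => Gamma (1 - z)) a :=
    ContinuousAt.comp' (f := (1 - ·)) (continuousAt_Gamma _ hsub) (by fun_prop)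
  have hGone : ContinuousAt (fun z => Gamma (1 + a - z)) a :=
    ContinuousAt.comp' (f := (1 + a - ·)) (by simpa using continuousAt_Gamma_one) (by fun_prop)
  have hGone' : ContinuousAt (fun z => Gamma (1 + z - a)) a :=
    ContinuousAt.comp' (f := (1 + · - a)) (by simpa using continuousAt_Gamma_one) (by fun_prop)
  exact ((continuousAt_const.mul hGadd).mul hGsub).div (hGone.mul hGone') (by simp)

lemma exists_ball_norm_inv_add_intCast_le (ha : a ∈ ℂ_ℤ) :
    ∃ r > 0, ∀ z ∈ Metric.ball a r, ∀ j : ℤ, z + j ≠ 0 ∧ ‖(z + j)⁻¹‖ ≤ 2 * ‖(a + j)⁻¹‖ := by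
  obtain ⟨ε, hε, hball⟩ := Metric.isOpen_iff.mp isOpen_compl_range_intCast a ha
  refine ⟨ε / 2, half_pos hε, fun z hz j => ?_⟩
  have hdist : ε ≤ ‖a + j‖ := by
    by_contra! h
    refine hball (a := ((-j : ℤ) : ℂ)) ?_ ⟨-j, rfl⟩
    rwa [Metric.mem_ball, dist_comm, dist_eq_norm, Int.cast_neg, sub_neg_eq_add]
  have htriangle : ‖a + j‖ ≤ ‖z + j‖ + ‖z - a‖ := by
    simpa [add_comm] using norm_sub_le (z + j) (z - a)
  rw [mem_ball_iff_norm] at hz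
  have ha_pos : 0 < ‖a + j‖ := hε.trans_le hdist
  have hz_pos : 0 < ‖z + j‖ := by linarith
  refine ⟨norm_pos_iff.mp hz_pos, ?_⟩
  rw [norm_inv, norm_inv, ← div_eq_mul_inv, inv_le_comm₀ hz_pos (by positivity), inv_div]
  linarith

lemma continuousAt_tsum_inv_mul_self (ha : a ∈ ℂ_ℤ) :
    ContinuousAt (fun z => ∑' j : ℤ, ((a + j) * (z + j))⁻¹) a := by
  obtain ⟨r, hr, hbound⟩ := exists_ball_norm_inv_add_intCast_le ha
  have hcont : ContinuousOn (fun z => ∑' j : ℤ, ((a + j) * (z + j))⁻¹) (Metric.ball a r) := by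
    refine continuousOn_tsum (u := fun j : ℤ => 2 * ‖((a + j) * (a + j))⁻¹‖) (fun j => ?_)
      ((summable_inv_mul a a).norm.mul_left 2) fun j z hz => ?_
    · exact ContinuousOn.inv₀ (by fun_prop) fun z hz =>
        mul_ne_zero (integerComplement_add_ne_zero ha j) (hbound z hz j).1
    · rw [mul_inv, norm_mul, mul_inv, norm_mul, mul_left_comm]
      gcongr
      exact (hbound z hz j).2
  exact hcont.continuousAt (Metric.ball_mem_nhds a hr)

theorem hasSum_inv_mul (ha : a ∈ ℂ_ℤ) (hc : c ∈ ℂ_ℤ) :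
    HasSum (fun j : ℤ => ((a + j) * (c + j))⁻¹) (dougallValue a c / (a * c)) := by
  rcases eq_or_ne a c with rfl | hac
  · have ha0 := integerComplement.ne_zero ha
    have hvalue : ContinuousAt (fun z => dougallValue a z / (a * z)) a :=
      (continuousAt_dougallValue_self ha).div (by fun_prop) (mul_ne_zero ha0 ha0)
    have hpunctured : (fun z => ∑' j : ℤ, ((a + j) * (z + j))⁻¹) =ᶠ[𝓝[≠] a]
        fun z => dougallValue a z / (a * z) := by
      filter_upwards [mem_nhdsWithin_of_mem_nhds (isOpen_compl_range_intCast.mem_nhds ha),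
        self_mem_nhdsWithin] with z hz hza
      rw [dougallValue_div_eq_cot_sub ha hz (Ne.symm hza)]
      exact (hasSum_inv_mul_of_ne ha hz (Ne.symm hza)).tsum_eq
    have hfull := ((continuousAt_tsum_inv_mul_self ha).eventuallyEq_nhds_iff_eventuallyEq_nhdsNE
      hvalue).mp hpunctured
    exact hfull.eq_of_nhds ▸ (summable_inv_mul a a).hasSum
  · rw [dougallValue_div_eq_cot_sub ha hc hac]
    exact hasSum_inv_mul_of_ne ha hc hac

end Dougall

section VanishingSums

variable {a : ℂ}

lemma hasSum_intCast_add_iff {f : ℂ → ℂ} {s : ℂ} (n : ℤ) :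
    HasSum (fun j : ℤ => f (j + n)) s ↔ HasSum (fun j : ℤ => f j) s := by
  simpa [Function.comp_def] using
    Equiv.hasSum_iff (f := fun j : ℤ => f j) (a := s) (Equiv.addRight n)

lemma inv_poch_sub_inv_poch_add_one {y : ℂ} (hy : y ∈ ℂ_ℤ) (n : ℕ) :
    (poch y n)⁻¹ - (poch (y + 1) n)⁻¹ = n * (poch y (n + 1 : ℕ))⁻¹ := by
  have hleft := poch_natCast_succ_left y n
  have hright := poch_natCast_succ y n
  have hsucc := poch_ne_zero hy (n + 1 : ℕ)
  have hn := poch_ne_zero hy n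
  have hn' : poch (y + 1) n ≠ 0 := right_ne_zero_of_mul (hleft ▸ hsucc)
  field_simp
  linear_combination (poch (y + 1) n) * hright - poch y n * hleft

lemma hasSum_inv_poch_add (ha : a ∈ ℂ_ℤ) (n : ℕ) :
    HasSum (fun j : ℤ => (poch (a + j) (n + 2 : ℕ))⁻¹) 0 := by
  induction n with
  | zero =>
    convert hasSum_inv_mul_add_one ha using 3 with j
    rw [poch_natCast_succ_left, Nat.cast_one, poch_one]
    ring
  | succ n ih =>
    have hshift : HasSum (fun j : ℤ => (poch (a + j + 1) (n + 2 : ℕ))⁻¹) 0 := by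
      simpa only [add_assoc, Int.cast_one] using
        (hasSum_intCast_add_iff (f := fun z => (poch (a + z) (n + 2 : ℕ))⁻¹) 1).mpr ih
    have hn : ((n + 2 : ℕ) : ℂ) ≠ 0 := Nat.cast_ne_zero.mpr (by lia)
    have hsum := (ih.sub hshift).div_const ((n + 2 : ℕ) : ℂ)
    rw [sub_zero, zero_div] at hsum
    refine hsum.congr_fun fun j => ?_
    rw [inv_poch_sub_inv_poch_add_one ((add_intCast_mem_integerComplement j).mpr ha),
      mul_div_cancel_left₀ _ hn, Nat.add_right_comm]

lemma hasSum_eval_div_poch (ha : a ∈ ℂ_ℤ) {n : ℕ} {Q : ℂ[X]} (hQ : Q.natDegree ≤ n) :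
    HasSum (fun j : ℤ => Q.eval (j : ℂ) / poch (a + j) (n + 2 : ℕ)) 0 := by
  induction n generalizing Q with
  | zero =>
    rw [eq_C_of_natDegree_le_zero hQ]
    simpa [div_eq_mul_inv] using (hasSum_inv_poch_add ha 0).mul_left (Q.coeff 0)
  | succ n ih =>
    set r : ℂ := -(a + (n + 2 : ℕ)) with hr
    have hdeg : (Q /ₘ (X - C r)).natDegree ≤ n := by
      rw [natDegree_divByMonic _ (monic_X_sub_C r), natDegree_X_sub_C]
      lia
    have hsum := ((hasSum_inv_poch_add ha (n + 1)).mul_left (Q.eval r)).add (ih hdeg)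
    rw [mul_zero, add_zero] at hsum
    refine hsum.congr_fun fun j => ?_
    have hdivision : Q.eval (j : ℂ) = Q.eval r + (j - r) * (Q /ₘ (X - C r)).eval (j : ℂ) := by
      have h := congrArg (eval (j : ℂ)) (modByMonic_add_div Q (X - C r))
      simpa [modByMonic_X_sub_C_eq_C_eval] using h.symm
    have hpoch : poch (a + j) (n + 1 + 2 : ℕ) = poch (a + j) (n + 2 : ℕ) * (j - r) := by
      rw [Nat.add_right_comm, poch_natCast_succ, hr]
      ring
    have hne := poch_ne_zero ((add_intCast_mem_integerComplement j).mpr ha) (n + 1 + 2 : ℕ)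
    rw [hpoch] at hne ⊢
    have hj := left_ne_zero_of_mul hne
    have hjr := right_ne_zero_of_mul hne
    rw [hdivision]
    field_simp

lemma hasSum_poch_mul_poch_div_poch (ha : a ∈ ℂ_ℤ) (y z : ℂ) (m n : ℕ) :
    HasSum (fun j : ℤ => poch (y + j) m * poch (z + j) n / poch (a + j) (m + n + 2 : ℕ)) 0 := by
  have hdeg : ((ascPochhammer ℂ m).comp (X + C y) *
      (ascPochhammer ℂ n).comp (X + C z)).natDegree ≤ m + n :=
    natDegree_mul_le.trans (by simp [natDegree_comp, ascPochhammer_natDegree])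
  simpa [poch_natCast, add_comm] using hasSum_eval_div_poch ha hdeg

lemma hasSum_poch_div_poch (ha : a ∈ ℂ_ℤ) (y : ℂ) (n : ℕ) :
    HasSum (fun j : ℤ => poch (y + j) n / poch (a + j) (n + 2 : ℕ)) 0 := by
  simpa using hasSum_poch_mul_poch_div_poch ha y 0 n 0

end VanishingSums

section Contiguity

variable {a d σ : ℂ}

-- `r * (e + z) = (r + a - e) * (a + z) + (e - a) * (d + L + z)` when `r = d + L - a`.
lemma hasSum_poch_succ_div_poch_mul_poch {e r s t : ℂ} {κ L M : ℕ} (ha : a ∈ ℂ_ℤ)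
    (hd : d ∈ ℂ_ℤ) (hr : r = d + L - a) (hr0 : r ≠ 0)
    (hs : HasSum (fun j : ℤ =>
      poch (e + 1 + j) M / (poch (a + 1 + j) κ * poch (d + j) (L + 1 : ℕ))) s)
    (ht : HasSum (fun j : ℤ =>
      poch (e + 1 + j) M / (poch (a + j) (κ + 1 : ℕ) * poch (d + j) L)) t) :
    HasSum (fun j : ℤ =>
        poch (e + j) (M + 1 : ℕ) / (poch (a + j) (κ + 1 : ℕ) * poch (d + j) (L + 1 : ℕ)))
      (((r + a - e) * s + (e - a) * t) / r) := by
  refine (((hs.mul_left _).add (ht.mul_left _)).div_const _).congr_fun fun j => ?_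
  have haj := poch_ne_zero ((add_intCast_mem_integerComplement j).mpr ha) (κ + 1 : ℕ)
  have hdj := poch_ne_zero ((add_intCast_mem_integerComplement j).mpr hd) (L + 1 : ℕ)
  rw [poch_natCast_succ_left, add_right_comm] at haj
  rw [poch_natCast_succ] at hdj
  obtain ⟨ha0, ha1⟩ := mul_ne_zero_iff.mp haj
  obtain ⟨hd0, hd1⟩ := mul_ne_zero_iff.mp hdj
  rw [poch_natCast_succ_left (e + j), add_right_comm e, poch_natCast_succ_left (a + j),
    add_right_comm a, poch_natCast_succ (d + j)]
  field_simp
  rw [hr]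
  ring

lemma hasSum_poch_div_mul_poch (ha : a ∈ ℂ_ℤ) (hd : d ∈ ℂ_ℤ) (hda : ∀ n : ℕ, 1 + d - a + n ≠ 0)
    (hσ : HasSum (fun j : ℤ => ((a + j) * (d + j))⁻¹) σ) (e : ℂ) (L : ℕ) :
    HasSum (fun j : ℤ => poch (e + j) L / ((a + j) * poch (d + j) (L + 1 : ℕ)))
      (poch (e - a) L / poch (1 + d - a) L * σ) := by
  induction L generalizing e with
  | zero => simpa using hσ
  | succ L ih =>
    have hsum := hasSum_poch_succ_div_poch_mul_poch (r := 1 + d - a + L) (κ := 0) (L := L + 1) ha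
      hd (by push_cast; ring) (hda L)
      (by simpa only [Nat.cast_zero, poch_zero, one_mul] using hasSum_poch_div_poch hd (e + 1) L)
      (by simpa only [zero_add, Nat.cast_one, poch_one] using ih (e + 1))
    simp only [zero_add, Nat.cast_one, poch_one] at hsum
    convert hsum using 1
    have hr := hda L
    rw [poch_natCast_succ_left (e - a), poch_natCast_succ (1 + d - a), sub_add_eq_add_sub]
    field_simp
    ring

lemma hasSum_poch_div_poch_mul (ha : a ∈ ℂ_ℤ) (hd : d ∈ ℂ_ℤ) (hda : ∀ n : ℕ, 1 + d - a + n ≠ 0)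
    (hσ : HasSum (fun j : ℤ => ((a + j) * (d + j))⁻¹) σ) (e : ℂ) (κ : ℕ) :
    HasSum (fun j : ℤ => poch (e + j) κ / (poch (a - κ + j) (κ + 1 : ℕ) * (d + j)))
      (poch (1 + d - κ - e) κ / poch (1 + d - a) κ * σ) := by
  induction κ generalizing e with
  | zero => simpa using hσ
  | succ κ ih =>
    have haκ := sub_natCast_mem_integerComplement ha (κ + 1)
    have hshift : a - (κ + 1 : ℕ) + 1 = a - κ := by push_cast; ring
    have hbase : 1 + d - (κ + 1 : ℕ) - e = 1 + d - κ - (e + 1) := by push_cast; ring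
    have hsum := hasSum_poch_succ_div_poch_mul_poch (r := 1 + d - a + κ) (κ := κ + 1) (L := 0)
      haκ hd (by push_cast; ring) (hda κ)
      (by simpa only [hshift, zero_add, Nat.cast_one, poch_one] using ih (e + 1))
      (by simpa only [Nat.cast_zero, poch_zero, mul_one] using hasSum_poch_div_poch haκ (e + 1) κ)
    simp only [zero_add, Nat.cast_one, poch_one] at hsum
    convert hsum using 1
    have hr := hda κ
    rw [hbase, poch_natCast_succ, poch_natCast_succ]
    push_cast
    field_simp
    ring

lemma choose_succ_mul_add (p : ℂ) (n k : ℕ) :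
    ((n + 1).choose (k + 1) : ℂ) * (p + k) =
      (p + n) * n.choose k + (p - 1) * n.choose (k + 1) := by
  have hstep : (n.choose (k + 1) : ℂ) * (k + 1) = n.choose k * (n - k) := by
    rcases le_or_gt k n with hkn | hnk
    · exact_mod_cast congrArg (Nat.cast (R := ℂ)) (Nat.choose_succ_right_eq n k)
    · simp [Nat.choose_eq_zero_of_lt hnk, Nat.choose_eq_zero_of_lt (Nat.lt_succ_of_lt hnk)]
  rw [Nat.choose_succ_succ, Nat.cast_add]
  linear_combination hstep

lemma choose_mul_poch_mul_poch_succ (p q : ℂ) (κ L : ℕ) :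
    (κ + L + 1 + 1).choose (κ + 1) * poch p (κ + 1 : ℕ) * poch q (L + 1 : ℕ) =
      (p + (κ + L + 1 : ℕ)) * ((κ + L + 1).choose κ * poch p κ * poch q (L + 1 : ℕ)) +
        q * ((κ + L + 1).choose (κ + 1) * poch (p - 1) (κ + 1 : ℕ) * poch (q + 1) L) := by
  rw [poch_natCast_succ p, poch_natCast_succ_left q, poch_natCast_succ_left (p - 1),
    sub_add_cancel]
  linear_combination
    poch p κ * (q * poch (q + 1) L) * choose_succ_mul_add p (κ + L + 1) κ

theorem hasSum_poch_div_poch_mul_poch (ha : a ∈ ℂ_ℤ) (hd : d ∈ ℂ_ℤ)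
    (hda : ∀ n : ℕ, 1 + d - a + n ≠ 0) (hσ : HasSum (fun j : ℤ => ((a + j) * (d + j))⁻¹) σ)
    (e : ℂ) (κ L : ℕ) :
    HasSum (fun j : ℤ =>
        poch (e + j) (κ + L : ℕ) / (poch (a - κ + j) (κ + 1 : ℕ) * poch (d + j) (L + 1 : ℕ)))
      ((κ + L).choose κ * poch (1 + d - κ - e) κ * poch (e - a + κ) L /
        poch (1 + d - a) (κ + L : ℕ) * σ) := by
  induction κ generalizing e L with
  | zero => simpa using hasSum_poch_div_mul_poch ha hd hda hσ e L
  | succ κ ihκ =>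
    induction L generalizing e with
    | zero => simpa using hasSum_poch_div_poch_mul ha hd hda hσ e (κ + 1)
    | succ L ihL =>
      have hshift : a - (κ + 1 : ℕ) + 1 = a - κ := by push_cast; ring
      have hs := ihκ (e + 1) (L + 1)
      have ht := ihL (e + 1)
      rw [← add_assoc κ L 1] at hs
      rw [Nat.add_right_comm κ 1 L] at ht
      have hr := hda (κ + L + 1)
      have hsum := hasSum_poch_succ_div_poch_mul_poch (κ := κ + 1) (L := L + 1)
        (sub_natCast_mem_integerComplement ha (κ + 1)) hd (by push_cast; ring) hr
        (by simpa only [hshift] using hs) ht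
      rw [show κ + 1 + (L + 1) = κ + L + 1 + 1 by lia]
      convert hsum using 1
      have hp : 1 + d - (κ + 1 : ℕ) - e = 1 + d - κ - (e + 1) := by push_cast; ring
      have hp' : 1 + d - (κ + 1 : ℕ) - (e + 1) = 1 + d - κ - (e + 1) - 1 := by push_cast; ring
      have hq : e - a + (κ + 1 : ℕ) = e + 1 - a + κ := by push_cast; ring
      have hq' : e + 1 - a + (κ + 1 : ℕ) = e + 1 - a + κ + 1 := by push_cast; ring
      rw [hp, hp', hq, hq', choose_mul_poch_mul_poch_succ, poch_natCast_succ (1 + d - a)]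
      field_simp
      push_cast
      ring

end Contiguity

section Bilateral

variable {a b c d e σ : ℂ} {k : ℤ} {M : ℕ}

lemma hasSum_poch_div_poch_neg_mul_poch (hd : d ∈ ℂ_ℤ) (e a : ℂ) (M n : ℕ) :
    HasSum (fun j : ℤ =>
      poch (e + j) M / (poch (a + j) (-n) * poch (d + j) (M + n + 2 : ℕ))) 0 := by
  refine (hasSum_poch_mul_poch_div_poch hd e (a - n) M n).congr_fun fun j => ?_
  rw [poch_neg_natCast, sub_add_eq_add_sub, inv_mul_eq_div, div_div_eq_mul_div]

lemma poch_mul_poch_div_poch_mul_poch (κ L : ℕ) (h : poch (a + b - c - (κ + L : ℕ)) κ ≠ 0) :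
    poch (-(κ + L : ℕ)) κ * poch b κ * poch (1 + c - a - b) (κ + L : ℕ) /
        (poch 1 κ * poch (a + b - c - (κ + L : ℕ)) κ) =
      (κ + L).choose κ * poch b κ * poch (1 + c - a - b) L := by
  have hone : poch 1 κ ≠ 0 := by
    rw [poch_natCast, ascPochhammer_eval_one]
    exact_mod_cast κ.factorial_ne_zero
  have hreflect : poch (a + b - c - (κ + L : ℕ)) κ = (-1) ^ κ * poch (1 + c - a - b + L) κ := by
    rw [poch_natCast_eq_neg_one_pow_mul]
    push_cast
    ring_nf
  have hsplit : poch (1 + c - a - b) (κ + L : ℕ) =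
      poch (1 + c - a - b) L * poch (1 + c - a - b + L) κ := by
    rw [add_comm κ, poch_natCast_add]
  rw [hreflect] at h
  rw [hreflect, hsplit, poch_neg_natCast_eq_choose]
  field_simp [right_ne_zero_of_mul h]

theorem hasSum_poch_div_poch_mul_poch_int (ha : a ∈ ℂ_ℤ) (hc : c ∈ ℂ_ℤ)
    (hca : ∀ n : ℕ, 1 + c - a + n ≠ 0) (hσ : HasSum (fun j : ℤ => ((a + j) * (c + j))⁻¹) σ)
    (hk : poch (a + b - c - M) k ≠ 0) :
    HasSum (fun j : ℤ =>
        poch (1 + c - b + j) M / (poch (a + j) (k + 1) * poch (c + k + j) (M + 1 - k)))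
      (poch (-M) k * poch b k * poch (1 + c - a - b) M /
        (poch 1 k * poch (a + b - c - M) k) / poch (1 + c - a) M * σ) := by
  rcases lt_or_ge k 0 with hneg | hnonneg
  · obtain ⟨n, rfl⟩ : ∃ n : ℕ, k = -(n + 1 : ℕ) := ⟨(-k - 1).toNat, by lia⟩
    have hone : poch 1 (-(n + 1 : ℕ)) = 0 := by
      rw [poch_neg_natCast, poch_natCast_succ]
      simp
    have hd : c + (-(n + 1 : ℕ) : ℤ) ∈ ℂ_ℤ := (add_intCast_mem_integerComplement _).mpr hc
    have hleft : (-(n + 1 : ℕ) + 1 : ℤ) = -n := by lia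
    have hright : (M + 1 - -(n + 1 : ℕ) : ℤ) = (M + n + 2 : ℕ) := by lia
    simpa only [hone, hleft, hright, zero_mul, div_zero, zero_div] using
      hasSum_poch_div_poch_neg_mul_poch hd (1 + c - b) a M n
  lift k to ℕ using hnonneg
  rcases lt_or_ge M k with hlt | hle
  · obtain ⟨n, rfl⟩ := Nat.exists_eq_add_of_lt hlt
    have hneg : poch (-M) (M + n + 1 : ℕ) = 0 := by
      rw [poch_neg_natCast_eq_choose, Nat.choose_eq_zero_of_lt hlt]
      simp
    have hleft : ((M + n + 1 : ℕ) + 1 : ℤ) = (M + n + 2 : ℕ) := by lia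
    have hright : (M + 1 - (M + n + 1 : ℕ) : ℤ) = -n := by lia
    simpa only [hneg, hleft, hright, zero_mul, zero_div, Int.cast_natCast,
      mul_comm (poch (c + _ + _) _)] using
      hasSum_poch_div_poch_neg_mul_poch ha (1 + c - b) (c + (M + n + 1 : ℕ)) M n
  · obtain ⟨L, rfl⟩ := Nat.exists_eq_add_of_le hle
    have hd := add_natCast_mem_integerComplement hc k
    have haκ := add_natCast_mem_integerComplement ha k
    have hσ' : HasSum (fun j : ℤ => ((a + k + j) * (c + k + j))⁻¹) σ := by
      simpa only [add_assoc, Int.cast_natCast, add_comm (k : ℂ)] using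
        (hasSum_intCast_add_iff (f := fun z => ((a + z) * (c + z))⁻¹) k).mpr hσ
    have hsum := hasSum_poch_div_poch_mul_poch haκ hd
      (by simpa only [← add_assoc, add_sub_add_right_eq_sub] using hca) hσ' (1 + c - b) k L
    have hp : 1 + (c + k) - k - (1 + c - b) = b := by ring
    have hq : 1 + c - b - (a + k) + k = 1 + c - a - b := by ring
    have hr : 1 + (c + k) - (a + k) = 1 + c - a := by ring
    have hright : ((k + L : ℕ) + 1 - k : ℤ) = (L + 1 : ℕ) := by lia
    rw [poch_mul_poch_div_poch_mul_poch k L hk]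
    simpa only [hp, hq, hr, hright, add_sub_cancel_right, Int.cast_natCast, Nat.cast_succ]
      using hsum

lemma poch_mul_poch_mul_poch_div_eq (ha : a ∈ ℂ_ℤ) (hc : c ∈ ℂ_ℤ) (he : e ∈ ℂ_ℤ) (k : ℤ) (M : ℕ)
    (j : ℤ) :
    poch a j * poch (c + k) j * poch (e + M) j /
        (poch (1 + a + k) j * poch (1 + c + M) j * poch e j) =
      a * poch (1 + a) k * (c * poch (1 + c) M) / (poch c k * poch e M) *
        (poch (e + j) M / (poch (a + j) (k + 1) * poch (c + k + j) (M + 1 - k))) := by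
  have hck := (add_intCast_mem_integerComplement k).mpr hc
  have hfirst := poch_div_poch_add ha j (k + 1)
  have hsecond := poch_div_poch_add hck j (M + 1 - k)
  have hthird := congrArg (·⁻¹) (poch_div_poch_add he j M)
  have hcM : poch c k * poch (c + k) (M + 1 - k) = c * poch (1 + c) M := by
    rw [← poch_add hc, add_sub_cancel, ← Nat.cast_succ, poch_natCast_succ_left, add_comm 1 c]
  have haK : poch a (k + 1) = a * poch (1 + a) k := by
    rw [add_comm k, poch_add ha, poch_one, Int.cast_one, add_comm 1 a]
  have hshift : c + k + (M + 1 - k : ℤ) = 1 + c + M := by push_cast; ring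
  have hshift' : a + (k + 1 : ℤ) = 1 + a + k := by push_cast; ring
  have hck0 := poch_ne_zero hc k
  rw [hshift'] at hfirst
  rw [hshift] at hsecond
  simp only [inv_div, Int.cast_natCast] at hthird
  calc _ = poch a j / poch (1 + a + k) j * (poch (c + k) j / poch (1 + c + M) j) *
        (poch (e + M) j / poch e j) := by ring
    _ = _ := by
      rw [hfirst, hsecond, hthird, haK, ← hcM]
      field_simp

end Bilateral

/-- A `₃H₃` summation: for generic parameters `a, b, c`, an arbitrary integer `k` and a
non-negative integer `M`,
`₃H₃[a, c+k, 1+c−b+M; 1+a+k, 1+c+M, 1+c−b; 1]` converges absolutely and has the stated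
closed-form evaluation. -/
theorem bilateral_3H3 (a b c : ℂ) (k : ℤ) (M : ℕ)
    (hg1 : ∀ m : ℕ, 1 + a ≠ -(m : ℂ)) (hg2 : ∀ m : ℕ, 1 - a ≠ -(m : ℂ))
    (hg3 : ∀ m : ℕ, 1 + c ≠ -(m : ℂ)) (hg4 : ∀ m : ℕ, 1 - c ≠ -(m : ℂ))
    (hg5 : ∀ m : ℕ, 1 + a - c ≠ -(m : ℂ)) (hg6 : ∀ m : ℕ, 1 + c - a ≠ -(m : ℂ))
    (hd1 : ∀ j : ℤ, poch (1 + a + k) j ≠ 0)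
    (hd2 : ∀ j : ℤ, poch (1 + c + M) j ≠ 0)
    (hd3 : ∀ j : ℤ, poch (1 + c - b) j ≠ 0)
    (hd4 : poch c k ≠ 0) (hd5 : poch (a + b - c - M) k ≠ 0)
    (hd6 : poch (1 + c - a) M ≠ 0) (hd7 : poch (1 + c - b) M ≠ 0) :
    (Summable fun j : ℤ =>
      ‖poch a j * poch (c + k) j * poch (1 + c - b + M) j /
        (poch (1 + a + k) j * poch (1 + c + M) j * poch (1 + c - b) j)‖) ∧
    (∑' j : ℤ, poch a j * poch (c + k) j * poch (1 + c - b + M) j /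
        (poch (1 + a + k) j * poch (1 + c + M) j * poch (1 + c - b) j)) =
      Complex.Gamma (1 + a) * Complex.Gamma (1 - a) * Complex.Gamma (1 + c) *
          Complex.Gamma (1 - c) / (Complex.Gamma (1 + a - c) * Complex.Gamma (1 + c - a)) *
        (poch (-(M : ℂ)) k * poch (1 + a) k * poch b k /
          (poch 1 k * poch c k * poch (a + b - c - M) k)) *
        (poch (1 + c) M * poch (1 + c - a - b) M /
          (poch (1 + c - a) M * poch (1 + c - b) M)) := by
  have ha : a ∈ ℂ_ℤ := by
    have h := mem_integerComplement_of_poch_ne_zero hd1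
    rw [show 1 + a + k = a + (1 + k : ℤ) by push_cast; ring] at h
    exact (add_intCast_mem_integerComplement _).mp h
  have hc : c ∈ ℂ_ℤ := by
    have h := mem_integerComplement_of_poch_ne_zero hd2
    rw [show 1 + c + M = c + (1 + M : ℤ) by push_cast; ring] at h
    exact (add_intCast_mem_integerComplement _).mp h
  have he := mem_integerComplement_of_poch_ne_zero hd3
  have hca (n : ℕ) : 1 + c - a + n ≠ 0 := fun h => hg6 n (eq_neg_of_add_eq_zero_left h)
  have hsum := (hasSum_poch_div_poch_mul_poch_int ha hc hca (hasSum_inv_mul ha hc) hd5).mul_left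
    (a * poch (1 + a) k * (c * poch (1 + c) M) / (poch c k * poch (1 + c - b) M))
  simp only [← poch_mul_poch_mul_poch_div_eq ha hc he k M] at hsum
  refine ⟨hsum.summable.norm, hsum.tsum_eq.trans ?_⟩
  have ha0 := integerComplement.ne_zero ha
  have hc0 := integerComplement.ne_zero hc
  rw [← dougallValue]
  field_simp
end

section
/- (Pfaff–Saalschütz summation.) Let m be a non-negative integer and a,b,c ∈ ℂ with c and a+b+1−m−c not in {0,−1,…,−m+1} (so no denominator vanishes). Then Σ_{k=0}^{m} ((a)_k(b)_k(−m)_k)/(k!·(c)_k(a+b+1−m−c)_k) = ((c−a)_m(c−b)_m)/((c)_m(c−a−b)_m). -/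
open Complex

/-!
Multiplying by `(c)_m (c - a - b)_m` and writing `e = c - a - b` clears all denominators and gives
`∑_{k + j = m} C(m, k) (a)_k (b)_k (e)_j (a + b + e + k)_j = (a + e)_m (b + e)_m`,
which is the Chu–Vandermonde identity applied three times: first to expand
`(a + b + e + k)_j = ((a + k) + (b + e))_j`, then, after regrouping the double sum, to sum over `k`,
and finally to sum over the remaining index.
-/

open Finset Nat

/-- The shifted factorial `(a)_n`, for `a` in an arbitrary semiring. -/
local notation "⦅" a "⦆_" n:max => Polynomial.eval a (ascPochhammer _ n)

section AntidiagonalSums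

theorem sum_antidiagonal_antidiagonal_assoc {A M : Type*} [AddMonoid A] [HasAntidiagonal A]
    [AddCommMonoid M] (f : A → A → A → M) (n : A) :
    ∑ x ∈ antidiagonal n, ∑ y ∈ antidiagonal x.2, f x.1 y.1 y.2 =
      ∑ x ∈ antidiagonal n, ∑ y ∈ antidiagonal x.1, f y.1 y.2 x.2 := by
  simp only [sum_sigma']
  refine sum_nbij' (fun ⟨(k, _), (i, l)⟩ ↦ ⟨(k + i, l), (k, i)⟩)
    (fun ⟨(_, l), (k, i)⟩ ↦ ⟨(k, i + l), (i, l)⟩) ?_ ?_ ?_ ?_ ?_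
  case refine_2 => simp +contextual [← add_assoc]
  all_goals simp +contextual [add_assoc]

theorem add_choose_mul_choose (k i l : ℕ) :
    (k + (i + l)).choose k * (i + l).choose i =
      (k + i + l).choose (k + i) * (k + i).choose k := by
  rw [choose_mul (Nat.le_add_right k i), Nat.add_sub_cancel_left, Nat.add_assoc,
    Nat.add_sub_cancel_left]

theorem sum_antidiagonal_choose_mul_assoc {R : Type*} [Semiring R] (f : ℕ → ℕ → ℕ → R) (n : ℕ) :
    ∑ x ∈ antidiagonal n, n.choose x.1 *
        ∑ y ∈ antidiagonal x.2, x.2.choose y.1 * f x.1 y.1 y.2 =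
      ∑ x ∈ antidiagonal n, n.choose x.1 *
        ∑ y ∈ antidiagonal x.1, x.1.choose y.1 * f y.1 y.2 x.2 := by
  let g (k i l : ℕ) : R := ((k + (i + l)).choose k * (i + l).choose i : ℕ) * f k i l
  calc
    _ = ∑ x ∈ antidiagonal n, ∑ y ∈ antidiagonal x.2, g x.1 y.1 y.2 := by
      refine sum_congr rfl fun x hx ↦ ?_
      rw [mul_sum]
      refine sum_congr rfl fun y hy ↦ ?_
      simp only [g, mem_antidiagonal.mp hy, mem_antidiagonal.mp hx, cast_mul, mul_assoc]
    _ = ∑ x ∈ antidiagonal n, ∑ y ∈ antidiagonal x.1, g y.1 y.2 x.2 :=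
      sum_antidiagonal_antidiagonal_assoc g n
    _ = _ := by
      refine sum_congr rfl fun x hx ↦ ?_
      rw [mul_sum]
      refine sum_congr rfl fun y hy ↦ ?_
      simp only [g, add_choose_mul_choose, mem_antidiagonal.mp hy, mem_antidiagonal.mp hx,
        cast_mul, mul_assoc]

end AntidiagonalSums

section CommSemiring

variable {R : Type*} [CommSemiring R]

theorem ascPochhammer_add_eval (n k : ℕ) (x : R) : ⦅x⦆_(n + k) = ⦅x⦆_n * ⦅x + n⦆_k := by
  simp [← ascPochhammer_mul, Polynomial.eval_comp]

/-- The **Chu–Vandermonde identity**. -/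
theorem ascPochhammer_eval_add (x y : R) (n : ℕ) :
    ⦅x + y⦆_n = ∑ ij ∈ antidiagonal n, n.choose ij.1 * (⦅x⦆_ij.1 * ⦅y⦆_ij.2) := by
  induction n with
  | zero => simp
  | succ n ih =>
    rw [ascPochhammer_succ_eval, ih, sum_mul,
      sum_antidiagonal_choose_succ_mul fun i j ↦ ⦅x⦆_i * ⦅y⦆_j, ← sum_add_distrib]
    refine sum_congr rfl fun ij hij ↦ ?_
    obtain rfl := mem_antidiagonal.mp hij
    rw [choose_symm_add, ascPochhammer_succ_eval, ascPochhammer_succ_eval]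
    push_cast
    ring

theorem sum_antidiagonal_choose_mul_ascPochhammer_eval (a b e : R) (m : ℕ) :
    ∑ x ∈ antidiagonal m, m.choose x.1 *
        (⦅a⦆_x.1 * ⦅b⦆_x.1 * ⦅e⦆_x.2 * ⦅a + b + e + x.1⦆_x.2) =
      ⦅a + e⦆_m * ⦅b + e⦆_m := by
  calc
    _ = ∑ x ∈ antidiagonal m, m.choose x.1 * ∑ y ∈ antidiagonal x.2, x.2.choose y.1 *
          (⦅a⦆_(x.1 + y.1) * ⦅b⦆_x.1 * ⦅e⦆_(y.2 + y.1) * ⦅b + e⦆_y.2) := by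
      refine sum_congr rfl fun x _ ↦ ?_
      congr 1
      rw [show a + b + e + x.1 = a + x.1 + (b + e) by ring, ascPochhammer_eval_add, mul_sum]
      refine sum_congr rfl fun y hy ↦ ?_
      rw [ascPochhammer_add_eval x.1, add_comm y.2, mem_antidiagonal.mp hy]
      ring
    _ = ∑ x ∈ antidiagonal m, m.choose x.1 * ∑ y ∈ antidiagonal x.1, x.1.choose y.1 *
          (⦅a⦆_(y.1 + y.2) * ⦅b⦆_y.1 * ⦅e⦆_(x.2 + y.2) * ⦅b + e⦆_x.2) :=
      sum_antidiagonal_choose_mul_assoc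
        (fun k i l ↦ ⦅a⦆_(k + i) * ⦅b⦆_k * ⦅e⦆_(l + i) * ⦅b + e⦆_l) m
    _ = ∑ x ∈ antidiagonal m, m.choose x.1 *
          (⦅a⦆_x.1 * ⦅e⦆_x.2 * ⦅b + e⦆_x.2 * ⦅b + (e + x.2)⦆_x.1) := by
      refine sum_congr rfl fun x _ ↦ ?_
      congr 1
      rw [ascPochhammer_eval_add b (e + x.2), mul_sum]
      refine sum_congr rfl fun y hy ↦ ?_
      rw [ascPochhammer_add_eval x.2, mem_antidiagonal.mp hy]
      ring
    _ = ∑ x ∈ antidiagonal m, m.choose x.1 * (⦅a⦆_x.1 * ⦅e⦆_x.2) * ⦅b + e⦆_m := by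
      refine sum_congr rfl fun x hx ↦ ?_
      rw [← mem_antidiagonal.mp hx, add_comm x.1, ascPochhammer_add_eval, add_assoc b]
      ring
    _ = _ := by rw [← sum_mul, ← ascPochhammer_eval_add]

end CommSemiring

section Ring

variable {R : Type*} [Ring R]

theorem ascPochhammer_eval_neg_natCast (m k : ℕ) :
    ⦅-(m : R)⦆_k = (-1) ^ k * m.descFactorial k := by
  rw [ascPochhammer_eval_neg_eq_descPochhammer, descPochhammer_eval_eq_descFactorial]

theorem ascPochhammer_eval_one_sub_sub (x : R) (n : ℕ) :
    ⦅1 - n - x⦆_n = (-1) ^ n * ⦅x⦆_n := by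
  rw [show 1 - (n : R) - x = -(x + n - 1) by abel, ascPochhammer_eval_neg_eq_descPochhammer,
    descPochhammer_eval_eq_ascPochhammer, sub_right_comm, add_sub_cancel_right, sub_add_cancel]

theorem ascPochhammer_eval_ne_zero [IsDomain R] {n : ℕ} {x : R}
    (hx : ∀ j : ℕ, j < n → x ≠ -(j : R)) : ⦅x⦆_n ≠ 0 := fun h ↦
  let ⟨j, hj, hjx⟩ := (ascPochhammer_eval_eq_zero_iff n x).mp h
  hx j hj (by rw [hjx, neg_neg])

end Ring

section Field

variable {K : Type*} [Field K]

theorem saalschuetz_summand_eq {k j : ℕ} (hk : (k ! : K) ≠ 0) (a b c e : K)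
    (hc : ⦅c⦆_(k + j) ≠ 0) (he : ⦅e⦆_(k + j) ≠ 0) :
    ⦅a⦆_k * ⦅b⦆_k * ⦅-((k + j : ℕ) : K)⦆_k / (k ! * ⦅c⦆_k * ⦅1 - (k + j : ℕ) - e⦆_k) =
      (k + j).choose k * (⦅a⦆_k * ⦅b⦆_k * ⦅e⦆_j * ⦅c + k⦆_j) / (⦅c⦆_(k + j) * ⦅e⦆_(k + j)) := by
  have hreflect : ⦅1 - ((k + j : ℕ) : K) - e⦆_k = (-1) ^ k * ⦅e + j⦆_k := by
    rw [← ascPochhammer_eval_one_sub_sub]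
    push_cast
    ring_nf
  have hcsplit := ascPochhammer_add_eval k j c
  have hesplit : ⦅e⦆_(k + j) = ⦅e⦆_j * ⦅e + j⦆_k := by rw [add_comm, ascPochhammer_add_eval]
  obtain ⟨hck, hckj⟩ := mul_ne_zero_iff.mp (hcsplit ▸ hc)
  obtain ⟨hej, hejk⟩ := mul_ne_zero_iff.mp (hesplit ▸ he)
  rw [hreflect, hcsplit, hesplit, ascPochhammer_eval_neg_natCast,
    descFactorial_eq_factorial_mul_choose, cast_mul]
  field_simp

theorem pfaff_saalschuetz_general {m : ℕ} (hm : (m ! : K) ≠ 0) (a b c : K)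
    (hc : ⦅c⦆_m ≠ 0) (hd : ⦅a + b + 1 - m - c⦆_m ≠ 0) :
    ∑ k ∈ range (m + 1), ⦅a⦆_k * ⦅b⦆_k * ⦅-(m : K)⦆_k /
        (k ! * ⦅c⦆_k * ⦅a + b + 1 - m - c⦆_k) =
      ⦅c - a⦆_m * ⦅c - b⦆_m / (⦅c⦆_m * ⦅c - a - b⦆_m) := by
  obtain ⟨e, rfl⟩ : ∃ e, c = a + b + e := ⟨c - a - b, by ring⟩
  rw [show a + b + 1 - m - (a + b + e) = 1 - m - e by ring] at hd ⊢
  have he : ⦅e⦆_m ≠ 0 := by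
    rw [ascPochhammer_eval_one_sub_sub] at hd
    exact right_ne_zero_of_mul hd
  rw [show a + b + e - a - b = e by ring, show a + b + e - a = b + e by ring,
    show a + b + e - b = a + e by ring, mul_comm (⦅b + e⦆_m),
    ← sum_antidiagonal_choose_mul_ascPochhammer_eval, sum_div,
    ← Nat.sum_antidiagonal_eq_sum_range_succ_mk fun x : ℕ × ℕ ↦
      ⦅a⦆_x.1 * ⦅b⦆_x.1 * ⦅-(m : K)⦆_x.1 / (x.1 ! * ⦅a + b + e⦆_x.1 * ⦅1 - m - e⦆_x.1)]
  refine sum_congr rfl fun x hx ↦ ?_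
  obtain rfl := mem_antidiagonal.mp hx
  have hk : (x.1 ! : K) ≠ 0 := ne_zero_of_dvd_ne_zero hm
    (Nat.cast_dvd_cast (factorial_dvd_factorial (Nat.le_add_right _ _)))
  exact saalschuetz_summand_eq hk a b (a + b + e) e hc he

end Field

theorem poch_natCast_s11 (a : ℂ) (n : ℕ) : poch a n = ⦅a⦆_n := by
  simp only [poch, Int.natCast_nonneg, if_true, Int.toNat_natCast]
  induction n with
  | zero => simp
  | succ n ih => rw [prod_range_succ, ih, ascPochhammer_succ_eval]

/-- The Pfaff–Saalschütz summation. -/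
theorem pfaff_saalschuetz (m : ℕ) (a b c : ℂ)
    (hc : ∀ j : ℕ, j < m → c ≠ -(j : ℂ))
    (hd : ∀ j : ℕ, j < m → a + b + 1 - m - c ≠ -(j : ℂ)) :
    (∑ k ∈ Finset.range (m + 1),
        poch a k * poch b k * poch (-(m : ℂ)) k /
          ((k.factorial : ℂ) * poch c k * poch (a + b + 1 - m - c) k)) =
      poch (c - a) m * poch (c - b) m / (poch c m * poch (c - a - b) m) := by
  simpa only [poch_natCast_s11] using
    pfaff_saalschuetz_general (mod_cast m.factorial_ne_zero) a b c
      (ascPochhammer_eval_ne_zero hc) (ascPochhammer_eval_ne_zero hd)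
end
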